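/- arXiv:2504.01642 — 2 statements merged into one kernel-verified Lean document; each statement's English description precedes it below -/
import Mathlib

section
/- For every μ > 0 there exist constants 0 < c, ε ≤ 1 and n₀ ∈ ℕ such that the following holds for all n ≥ n₀. If G is an n-vertex graph that is ⌈εn⌉-joined and has minimum degree δ(G) ≥ μn, then G contains a spanning nearly-balanced subdivision of the complete graph K_t for every integer t with 2 ≤ t ≤ c·√n. -/
open SimpleGraph

/-- `G` is `m`-joined: between any two disjoint vertex sets of size `m` there is an edge. -/
def IsJoined {V : Type*} (G : SimpleGraph V) (m : ℕ) : Prop :=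
  ∀ A B : Finset V, Disjoint A B → A.card = m → B.card = m →
    ∃ a ∈ A, ∃ b ∈ B, G.Adj a b

/-- `G` contains a spanning nearly-balanced subdivision of the complete graph `K_t`:
there are `t` (distinct) branch vertices, pairwise internally disjoint paths
joining every pair of branch vertices, every vertex of `G` lies on one of these
paths, and there is a positive integer `ℓ` such that every branching path has
length between `ℓ - 1` and `ℓ + 1`. -/
def HasSpanningNearlyBalancedKSubdivision {V : Type*} (G : SimpleGraph V) (t : ℕ) : Prop :=
  ∃ (b : Fin t ↪ V) (P : ∀ i j : Fin t, i < j → G.Walk (b i) (b j)),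
    (∀ i j (h : i < j), (P i j h).IsPath) ∧
    (∀ i j (h : i < j) (k : Fin t), k ≠ i → k ≠ j → b k ∉ (P i j h).support) ∧
    (∀ i j (h : i < j) (i' j' : Fin t) (h' : i' < j'), ¬(i = i' ∧ j = j') →
      ∀ v : V, v ∈ (P i j h).support → v ∈ (P i' j' h').support →
        ∃ k : Fin t, v = b k) ∧
    (∀ v : V, ∃ (i j : Fin t) (h : i < j), v ∈ (P i j h).support) ∧
    (∃ ℓ : ℕ, 1 ≤ ℓ ∧ ∀ i j (h : i < j),
      ℓ - 1 ≤ (P i j h).length ∧ (P i j h).length ≤ ℓ + 1)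

/-!
Random sampling reserves two small disjoint sets `S` and `Z` in which every vertex keeps many
neighbours. In the rest of the graph there is a path `L` through all of `Z` on which the two
neighbours of each vertex of `Z` are adjacent, so that it can be bypassed. After the branch
vertices, `L` and some vertices of `S` are removed, the rest of `S` gives every vertex large degree,
and rotations in the joined graph yield a Hamilton path `H` with prescribed ends. The paths `L` and
`H` are cut into pieces of equal length up to one, one for each pair of branch vertices, and the
ends of a piece are attached to its branch vertices by links with two inner vertices.

The links of the pieces of `L` and at the two ends of `H` run through `S` and are chosen before `H`.
The remaining ends of pieces of `H` are known only afterwards; their links run through `Z`, hence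
through inner vertices of pieces of `L`, which are bypassed. A rainbow choice of these links uses at
most one vertex from each piece, so every branching path changes its length by at most one.
-/

open Finset

section Joined

variable {V : Type*} {G : SimpleGraph V} {m : ℕ}

open Classical in
/-- The neighbours of `v` in the finite set `U`. -/
noncomputable def nbrsIn (G : SimpleGraph V) (U : Finset V) (v : V) : Finset V :=
  {u ∈ U | G.Adj v u}

@[simp]
theorem mem_nbrsIn {U : Finset V} {u v : V} : u ∈ nbrsIn G U v ↔ u ∈ U ∧ G.Adj v u := by
  simp [nbrsIn]

theorem nbrsIn_subset (U : Finset V) (v : V) : nbrsIn G U v ⊆ U := fun _ hu => (mem_nbrsIn.1 hu).1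

theorem card_nbrsIn_le_add [DecidableEq V] {U T W : Finset V} (h : U ⊆ T ∪ W) (v : V) :
    #(nbrsIn G U v) ≤ #(nbrsIn G T v) + #(nbrsIn G W v) := by
  refine (card_le_card fun u hu => ?_).trans (card_union_le _ _)
  have hmem := h (mem_nbrsIn.1 hu).1
  simp only [mem_union, mem_nbrsIn] at hu hmem ⊢
  tauto

theorem card_nbrsIn_le_card_sdiff_add [DecidableEq V] (U T : Finset V) (v : V) :
    #(nbrsIn G U v) ≤ #(nbrsIn G (U \ T) v) + #T :=
  (card_nbrsIn_le_add (by simp) v).trans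
    (Nat.add_le_add_left (card_le_card (nbrsIn_subset T v)) _)

theorem card_nbrsIn_univ [Fintype V] [DecidableRel G.Adj] (v : V) :
    #(nbrsIn G univ v) = G.degree v :=
  congrArg card (by ext; simp)

theorem IsJoined.exists_adj_of_disjoint (hJ : IsJoined G m) {A C : Finset V}
    (hAC : Disjoint A C) (hA : m ≤ #A) (hC : m ≤ #C) : ∃ a ∈ A, ∃ c ∈ C, G.Adj a c := by
  obtain ⟨A', hA', hA'm⟩ := exists_subset_card_eq hA
  obtain ⟨C', hC', hC'm⟩ := exists_subset_card_eq hC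
  obtain ⟨a, ha, c, hc, hac⟩ := hJ A' C' (hAC.mono hA' hC') hA'm hC'm
  exact ⟨a, hA' ha, c, hC' hc, hac⟩

theorem IsJoined.exists_adj (hJ : IsJoined G m) {A C : Finset V}
    (hA : m ≤ #A) (hC : 2 * m ≤ #C) : ∃ a ∈ A, ∃ c ∈ C, G.Adj a c := by
  classical
  obtain ⟨A', hA', hA'm⟩ := exists_subset_card_eq hA
  have hsdiff : m ≤ #(C \ A') := by
    have := le_card_sdiff A' C
    omega
  obtain ⟨a, ha, c, hc, hac⟩ := hJ.exists_adj_of_disjoint disjoint_sdiff hA'm.ge hsdiff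
  exact ⟨a, hA' ha, c, (mem_sdiff.1 hc).1, hac⟩

section Colour

variable {γ : Type*} (col : V → γ)

theorem card_filter_mem_insert_le [DecidableEq γ] {L : ℕ} {A : Finset V}
    (hL : ∀ c, #{a ∈ A | col a = c} ≤ L) (c : γ) (D : Finset γ) :
    #{a ∈ A | col a ∈ insert c D} ≤ #{a ∈ A | col a ∈ D} + L := by
  classical
  refine (card_le_card fun a ha => ?_).trans
    ((card_union_le {a ∈ A | col a ∈ D} {a ∈ A | col a = c}).trans
      (Nat.add_le_add_left (hL c) _))
  simp only [mem_filter, mem_insert, mem_union] at ha ⊢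
  tauto

/-- Take a minimal set of colours that captures `m` elements of `A` or of `C`: by minimality it
captures at most `m + L` elements of each, so `m` elements of the other set have other colours. -/
theorem IsJoined.exists_adj_color_ne [DecidableEq γ] (hJ : IsJoined G m) {L : ℕ} {A C : Finset V}
    (hLA : ∀ c, #{a ∈ A | col a = c} ≤ L) (hLC : ∀ c, #{a ∈ C | col a = c} ≤ L)
    (hA : 2 * m + L ≤ #A) (hC : 2 * m + L ≤ #C) :
    ∃ a ∈ A, ∃ c ∈ C, G.Adj a c ∧ col a ≠ col c := by
  classical
  obtain ⟨D, hD, hDmin⟩ := exists_minimal_of_wellFoundedLT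
    (fun D : Finset γ => m ≤ #{a ∈ A | col a ∈ D} ∨ m ≤ #{c ∈ C | col c ∈ D})
    ⟨A.image col, Or.inl (by
      rw [filter_true_of_mem fun a ha => mem_image_of_mem _ ha]
      omega)⟩
  have hsmall : #{a ∈ A | col a ∈ D} ≤ m + L ∧ #{c ∈ C | col c ∈ D} ≤ m + L := by
    obtain rfl | ⟨c, hc⟩ := D.eq_empty_or_nonempty
    · simp
    · have hlt := mt (@hDmin (D.erase c) · (erase_subset c D)) fun h => notMem_erase c D (h hc)
      have hA' := card_filter_mem_insert_le col hLA c (D.erase c)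
      have hC' := card_filter_mem_insert_le col hLC c (D.erase c)
      rw [insert_erase hc] at hA' hC'
      omega
  have hedge : ∀ A C : Finset V, m ≤ #{a ∈ A | col a ∈ D} → #{c ∈ C | col c ∈ D} ≤ m + L →
      2 * m + L ≤ #C → ∃ a ∈ A, ∃ c ∈ C, G.Adj a c ∧ col a ≠ col c := by
    intro A C hAD hCD hC
    have hsplit := card_filter_add_card_filter_not (s := C) (fun c => col c ∈ D)
    obtain ⟨a, ha, c, hc, hac⟩ := hJ.exists_adj_of_disjoint (A := {a ∈ A | col a ∈ D})
      (C := {c ∈ C | col c ∉ D}) (disjoint_left.2 fun v hv hv' =>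
        (mem_filter.1 hv').2 (mem_filter.1 hv).2) hAD (by omega)
    rw [mem_filter] at ha hc
    exact ⟨a, ha.1, c, hc.1, hac, fun h => hc.2 (h ▸ ha.2)⟩
  obtain hAD | hCD := hD
  · exact hedge A C hAD hsmall.2 hC
  · obtain ⟨c, hc, a, ha, hca, hne⟩ := hedge C A hCD hsmall.1 hA
    exact ⟨a, ha, c, hc, hca.symm, hne.symm⟩

end Colour

end Joined

section Links

variable {V κ : Type*} {G : SimpleGraph V} {m : ℕ}

/-- A system of links indexed by the slots in `A`: the link in slot `c` is the path
`p c, h (c, false), h (c, true), q c`, and the inner vertices of all links are distinct vertices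
of `Y`. -/
structure IsLinkSystem (G : SimpleGraph V) (A : Finset κ) (p q : κ → V) (Y : Finset V)
    (h : κ × Bool → V) : Prop where
  adj_left : ∀ c ∈ A, G.Adj (p c) (h (c, false))
  adj : ∀ c ∈ A, G.Adj (h (c, false)) (h (c, true))
  adj_right : ∀ c ∈ A, G.Adj (h (c, true)) (q c)
  mem : ∀ a : κ × Bool, a.1 ∈ A → h a ∈ Y
  injOn : Set.InjOn h {a | a.1 ∈ A}

theorem injOn_ite_of_ne [DecidableEq κ] {γ : Type*} {A A' : Finset κ} {f g : κ × Bool → γ}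
    (hf : Set.InjOn f {a | a.1 ∈ A}) (hg : Set.InjOn g {a | a.1 ∈ A'})
    (hfg : ∀ a b : κ × Bool, a.1 ∈ A → b.1 ∈ A' → f a ≠ g b) :
    Set.InjOn (fun a => if a.1 ∈ A then f a else g a) {a | a.1 ∈ A ∪ A'} := by
  intro a ha b hb hab
  simp only [Set.mem_ofPred_eq, mem_union] at ha hb
  by_cases haA : a.1 ∈ A <;> by_cases hbA : b.1 ∈ A <;>
    simp only [haA, hbA, if_true, if_false, false_or] at hab ha hb
  · exact hf haA hbA hab
  · exact (hfg a b haA hb hab).elim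
  · exact (hfg b a hbA ha hab.symm).elim
  · exact hg ha hb hab

theorem IsLinkSystem.ite [DecidableEq κ] [DecidableEq V] {A A' : Finset κ} {p q : κ → V}
    {Y Y' : Finset V} {h h' : κ × Bool → V} (hA : IsLinkSystem G A p q Y h)
    (hA' : IsLinkSystem G A' p q Y' h')
    (hne : ∀ a b : κ × Bool, a.1 ∈ A → b.1 ∈ A' → h a ≠ h' b) :
    IsLinkSystem G (A ∪ A') p q (Y ∪ Y') (fun a => if a.1 ∈ A then h a else h' a) where
  adj_left c hc := by
    split_ifs with hcA
    exacts [hA.adj_left c hcA, hA'.adj_left c ((mem_union.1 hc).resolve_left hcA)]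
  adj c hc := by
    split_ifs with hcA
    exacts [hA.adj c hcA, hA'.adj c ((mem_union.1 hc).resolve_left hcA)]
  adj_right c hc := by
    split_ifs with hcA
    exacts [hA.adj_right c hcA, hA'.adj_right c ((mem_union.1 hc).resolve_left hcA)]
  mem a ha := by
    split_ifs with haA
    exacts [mem_union_left _ (hA.mem a haA),
      mem_union_right _ (hA'.mem a ((mem_union.1 ha).resolve_left haA))]
  injOn := injOn_ite_of_ne hA.injOn hA'.injOn hne

theorem IsLinkSystem.mono {A : Finset κ} {p q : κ → V} {Y Y' : Finset V} {h : κ × Bool → V}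
    (hA : IsLinkSystem G A p q Y h) (hY : Y ⊆ Y') : IsLinkSystem G A p q Y' h :=
  { hA with mem := fun a ha => hY (hA.mem a ha) }

theorem isLinkSystem_singleton {c : κ} {p q : κ → V} {Y : Finset V} {u v : V} (hu : u ∈ Y)
    (hv : v ∈ Y) (hpu : G.Adj (p c) u) (huv : G.Adj u v) (hvq : G.Adj v (q c)) :
    IsLinkSystem G {c} p q Y (fun a => cond a.2 v u) where
  adj_left := by simpa using hpu
  adj := by simpa using huv
  adj_right := by simpa using hvq
  mem := by
    rintro ⟨_, _ | _⟩ _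
    exacts [hu, hv]
  injOn := by
    rintro ⟨_, _ | _⟩ ha ⟨_, _ | _⟩ hb hab <;>
      simp_all [huv.ne, huv.ne']

theorem card_le_card_filter_notMem_add {γ : Type*} [DecidableEq γ] (col : V → γ) {L : ℕ}
    {A : Finset V} (hL : ∀ c, #{a ∈ A | col a = c} ≤ L) (D : Finset γ) :
    #A ≤ #{a ∈ A | col a ∉ D} + L * #D := by
  have hD : #{a ∈ A | col a ∈ D} ≤ L * #D :=
    card_le_mul_card_image_of_maps_to (fun a ha => (mem_filter.1 ha).2) L fun c _ =>
      (card_le_card (filter_subset_filter _ (filter_subset _ _))).trans (hL c)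
  have hsplit := card_filter_add_card_filter_not (s := A) (fun a => col a ∈ D)
  omega

theorem IsJoined.exists_link_avoiding_colors (hJ : IsJoined G m) {γ : Type*} [DecidableEq γ]
    (col : V → γ) {L : ℕ} {Z : Finset V} (hL : ∀ c, #{z ∈ Z | col z = c} ≤ L) (D : Finset γ)
    {x y : V} (hx : 2 * m + L + L * #D ≤ #(nbrsIn G Z x))
    (hy : 2 * m + L + L * #D ≤ #(nbrsIn G Z y)) :
    ∃ u ∈ Z, ∃ v ∈ Z, G.Adj x u ∧ G.Adj u v ∧ G.Adj v y ∧
      col u ≠ col v ∧ col u ∉ D ∧ col v ∉ D := by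
  have hclass : ∀ w c, #{u ∈ {u ∈ nbrsIn G Z w | col u ∉ D} | col u = c} ≤ L := fun w c =>
    (card_le_card (filter_subset_filter _ ((filter_subset _ _).trans (nbrsIn_subset Z w)))).trans
      (hL c)
  have hcard : ∀ w, #(nbrsIn G Z w) ≤ #{u ∈ nbrsIn G Z w | col u ∉ D} + L * #D := fun w =>
    card_le_card_filter_notMem_add col (fun c =>
      (card_le_card (filter_subset_filter _ (nbrsIn_subset Z w))).trans (hL c)) D
  have hcardx := hcard x
  have hcardy := hcard y
  obtain ⟨u, hu, v, hv, huv, hne⟩ := hJ.exists_adj_color_ne col (hclass x) (hclass y)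
    (by omega) (by omega)
  simp only [mem_filter, mem_nbrsIn] at hu hv
  exact ⟨u, hu.1.1, v, hv.1.1, hu.1.2, huv, hv.1.2.symm, hne, hu.2, hv.2⟩

theorem IsJoined.exists_linkSystem (hJ : IsJoined G m) {γ : Type*} [DecidableEq γ]
    (col : V → γ) {L : ℕ} {Z : Finset V} (hL : ∀ c, #{z ∈ Z | col z = c} ≤ L) (p q : κ → V)
    (A : Finset κ) (hp : ∀ c ∈ A, 2 * #A * L + 2 * m ≤ #(nbrsIn G Z (p c)))
    (hq : ∀ c ∈ A, 2 * #A * L + 2 * m ≤ #(nbrsIn G Z (q c))) :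
    ∃ h, IsLinkSystem G A p q Z h ∧ Set.InjOn (col ∘ h) {a | a.1 ∈ A} := by
  classical
  induction A using Finset.induction_on with
  | empty => exact ⟨fun a => p a.1, by constructor <;> simp, by simp⟩
  | insert c A hc ih =>
    rw [card_insert_of_notMem hc] at hp hq
    have hle : 2 * #A * L + 2 * m ≤ 2 * (#A + 1) * L + 2 * m := by gcongr; omega
    obtain ⟨h, hsys, hinj⟩ := ih (fun d hd => hle.trans (hp d (mem_insert_of_mem hd)))
      fun d hd => hle.trans (hq d (mem_insert_of_mem hd))
    let used : Finset γ := (A ×ˢ univ).image (col ∘ h)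
    have hused : #used ≤ 2 * #A := card_image_le.trans (by simp [card_product, mul_comm])
    have hdeg : 2 * m + L + L * #used ≤ 2 * (#A + 1) * L + 2 * m := by
      have := Nat.mul_le_mul_left L hused
      linarith
    obtain ⟨u, hu, v, hv, hpu, huv, hvq, hne, hu', hv'⟩ :=
      hJ.exists_link_avoiding_colors col hL used
        (hdeg.trans (hp c (mem_insert_self c A))) (hdeg.trans (hq c (mem_insert_self c A)))
    have hnew : ∀ a b : κ × Bool, a.1 ∈ A → b.1 ∈ ({c} : Finset κ) →
        (col ∘ h) a ≠ (col ∘ fun b : κ × Bool => cond b.2 v u) b := by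
      rintro a ⟨b, _ | _⟩ ha - heq
      exacts [hu' (mem_image.2 ⟨a, by simp [ha], heq⟩), hv' (mem_image.2 ⟨a, by simp [ha], heq⟩)]
    refine ⟨fun a => if a.1 ∈ A then h a else cond a.2 v u, ?_, ?_⟩
    · have := hsys.ite (isLinkSystem_singleton hu hv hpu huv hvq) fun a b ha hb heq =>
        hnew a b ha hb (congrArg col heq)
      rwa [union_self, union_comm, ← insert_eq] at this
    · have hinj' : Set.InjOn (col ∘ fun b : κ × Bool => cond b.2 v u)
          {a | a.1 ∈ ({c} : Finset κ)} := by
        rintro ⟨_, _ | _⟩ ha ⟨_, _ | _⟩ hb hab <;> simp_all [eq_comm]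
      have := injOn_ite_of_ne hinj hinj' hnew
      rw [union_comm, ← insert_eq] at this
      refine this.congr fun a _ => ?_
      simp only [Function.comp_apply, apply_ite col]

end Links

section Paths

variable {V : Type*} {G : SimpleGraph V} {U W : Finset V} {x y a b u v w : V} {l l' : List V}

/-- `l` lists the vertices of a (possibly empty) path of `G` inside `U`, in order. -/
structure IsPathIn (G : SimpleGraph V) (U : Finset V) (l : List V) : Prop where
  nodup : l.Nodup
  isChain : l.IsChain G.Adj
  subset : ∀ v ∈ l, v ∈ U

/-- `l` lists the vertices of a path of `G` inside `U` from `x` to `y`, in order. -/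
structure IsPathBetween (G : SimpleGraph V) (U : Finset V) (x y : V) (l : List V) : Prop extends
    IsPathIn G U l where
  head?_eq : l.head? = some x
  getLast?_eq : l.getLast? = some y

theorem IsPathIn.of_isInfix (hl : IsPathIn G U l) (h : l' <:+: l) : IsPathIn G U l' where
  nodup := h.sublist.nodup hl.nodup
  isChain := hl.isChain.infix h
  subset v hv := hl.subset v (h.subset hv)

theorem IsPathIn.isPathBetween (hl : IsPathIn G U l) (hne : l ≠ []) :
    IsPathBetween G U (l.head hne) (l.getLast hne) l :=
  { hl with
    head?_eq := List.head?_eq_some_head hne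
    getLast?_eq := List.getLast?_eq_some_getLast hne }

theorem IsPathBetween.mono (hl : IsPathBetween G U x y l) (hUW : U ⊆ W) :
    IsPathBetween G W x y l :=
  { hl with subset := fun v hv => hUW (hl.subset v hv) }

theorem IsPathBetween.head_mem (hl : IsPathBetween G U x y l) : x ∈ l :=
  List.mem_of_mem_head? hl.head?_eq

theorem IsPathBetween.getLast_mem (hl : IsPathBetween G U x y l) : y ∈ l :=
  List.mem_of_getLast? hl.getLast?_eq

theorem isPathBetween_singleton (hx : x ∈ U) : IsPathBetween G U x x [x] where
  nodup := List.nodup_singleton x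
  isChain := List.isChain_singleton x
  subset := by simpa using hx
  head?_eq := rfl
  getLast?_eq := rfl

theorem IsPathBetween.append (hl : IsPathBetween G U x a l) (hl' : IsPathBetween G U b y l')
    (hab : G.Adj a b) (hdisj : l.Disjoint l') : IsPathBetween G U x y (l ++ l') where
  nodup := hl.nodup.append hl'.nodup hdisj
  isChain := List.isChain_append.2 ⟨hl.isChain, hl'.isChain, by
    simpa [hl.getLast?_eq, hl'.head?_eq] using hab⟩
  subset v hv := (List.mem_append.1 hv).elim (hl.subset v) (hl'.subset v)
  head?_eq := by simp [hl.head?_eq]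
  getLast?_eq := by simp [hl'.getLast?_eq]

theorem IsPathBetween.reverse (hl : IsPathBetween G U x y l) :
    IsPathBetween G U y x l.reverse where
  nodup := List.nodup_reverse.2 hl.nodup
  isChain := List.isChain_reverse.2 (hl.isChain.imp fun _ _ h => h.symm)
  subset v hv := hl.subset v (List.mem_reverse.1 hv)
  head?_eq := by simp [hl.getLast?_eq]
  getLast?_eq := by simp [hl.head?_eq]

theorem IsPathBetween.rotation {A B C : List V} {a' b' : V} (hA : IsPathBetween G U x a A)
    (hB : IsPathBetween G U a' b B) (hC : IsPathBetween G U b' y C) (hAB : A.Disjoint B)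
    (hAC : A.Disjoint C) (hBC : B.Disjoint C) (hwU : w ∈ U) (hwA : w ∉ A) (hwB : w ∉ B)
    (hwC : w ∉ C) (hwa : G.Adj w a) (hwb : G.Adj w b) (hab : G.Adj a' b') :
    IsPathBetween G U x y (A ++ ([w] ++ (B.reverse ++ C))) := by
  refine hA.append ((isPathBetween_singleton hwU).append
    (hB.reverse.append hC hab ?_) hwb ?_) hwa.symm ?_
  · simpa [List.Disjoint] using hBC
  · simp [hwB, hwC]
  · simp only [List.disjoint_append_right, List.disjoint_singleton]
    exact ⟨hwA, by simpa [List.Disjoint] using hAB, hAC⟩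

variable [DecidableEq V]

theorem formPerm_eq_of_isInfix (hl : l.Nodup) (huv : [u, v] <:+: l) : l.formPerm u = v := by
  obtain ⟨A, C, rfl⟩ := huv
  have hlt : A.length + 1 < (A ++ [u, v] ++ C).length := by simp
  simpa [List.getElem_append] using List.formPerm_apply_lt_getElem _ hl A.length hlt

/-- A path can be cut after any vertex `u` other than its last one; `l.formPerm u` is the vertex
following `u` on the path `l`. -/
theorem IsPathBetween.exists_split (hl : IsPathBetween G U x y l) (hu : u ∈ l) (huy : u ≠ y) :
    ∃ A C, l = A ++ C ∧ IsPathBetween G U x u A ∧ IsPathBetween G U (l.formPerm u) y C := by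
  obtain ⟨A, C, rfl⟩ := List.append_of_mem hu
  obtain _ | ⟨v, C⟩ := C
  · exact absurd (by simpa using hl.getLast?_eq) huy
  have hsplit : A ++ u :: v :: C = (A ++ [u]) ++ v :: C := by simp
  have huv : [u, v] <:+: A ++ u :: v :: C := ⟨A, C, by simp⟩
  rw [formPerm_eq_of_isInfix hl.nodup huv]
  refine ⟨A ++ [u], v :: C, hsplit,
    { hl.toIsPathIn.of_isInfix ⟨[], v :: C, by simp⟩ with head?_eq := ?_, getLast?_eq := by simp },
    { hl.toIsPathIn.of_isInfix ⟨A ++ [u], [], by simp⟩ with head?_eq := rfl, getLast?_eq := ?_ }⟩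
  · simpa [List.head?_append] using hl.head?_eq
  · simpa [List.getLast?_append] using hl.getLast?_eq

theorem IsPathBetween.insert_of_adj {M : List V} (hl : IsPathBetween G U x y l) (hu : u ∈ l)
    (huy : u ≠ y) (hM : IsPathBetween G U a b M) (hMl : M.Disjoint l) (hua : G.Adj u a)
    (hb : G.Adj (l.formPerm u) b) :
    ∃ l', IsPathBetween G U x y l' ∧ l'.length = l.length + M.length := by
  obtain ⟨A, C, hAC, hA, hC⟩ := hl.exists_split hu huy
  have hdisj := List.disjoint_of_nodup_append (hAC ▸ hl.nodup)
  rw [hAC, List.disjoint_append_right] at hMl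
  exact ⟨A ++ (M ++ C), hA.append (hM.append hC hb.symm hMl.2) hua
    (List.disjoint_append_right.2 ⟨hMl.1.symm, hdisj⟩), by simp [hAC]; omega⟩

theorem IsPathBetween.formPerm_eq_formPerm (hl' : IsPathBetween G U a b l') (hl : l.Nodup)
    (h : l' <:+: l) (hv : v ∈ l') (hvb : v ≠ b) : l'.formPerm v = l.formPerm v := by
  obtain ⟨A, C, rfl⟩ := h
  obtain ⟨B, D, rfl⟩ := List.append_of_mem hv
  obtain _ | ⟨w, D⟩ := D
  · exact absurd (by simpa using hl'.getLast?_eq) hvb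
  have hvw : [v, w] <:+: B ++ v :: w :: D := ⟨B, D, by simp⟩
  rw [formPerm_eq_of_isInfix hl'.nodup hvw,
    formPerm_eq_of_isInfix hl (hvw.trans (List.infix_append A _ C))]

theorem IsPathBetween.exists_longer_of_adj_formPerm (hl : IsPathBetween G U x y l) (hwU : w ∈ U)
    (hwl : w ∉ l) (hu : u ∈ l) (huy : u ≠ y) (hv : v ∈ l) (hvy : v ≠ y) (hwu : G.Adj w u)
    (hwv : G.Adj w v) (huv : G.Adj (l.formPerm u) (l.formPerm v)) :
    ∃ l', IsPathBetween G U x y l' ∧ l.length < l'.length := by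
  obtain ⟨A, C, hAC, hA, hC⟩ := hl.exists_split hu huy
  have hvu : v ≠ u := by
    rintro rfl
    exact huv.ne rfl
  rcases List.mem_append.1 (hAC ▸ hv) with hvA | hvC
  · obtain ⟨A', B, rfl, hA', hB⟩ := hA.exists_split hvA hvu
    rw [hA.formPerm_eq_formPerm hl.nodup ⟨[], C, by simp [hAC]⟩ hvA hvu] at hB
    have hnodup := hAC ▸ hl.nodup
    simp only [List.nodup_append', List.disjoint_append_left] at hnodup
    simp only [hAC, List.mem_append, not_or] at hwl
    exact ⟨_, hA'.rotation hB hC hnodup.1.2.2 hnodup.2.2.1 hnodup.2.2.2 hwU hwl.1.1 hwl.1.2 hwl.2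
      hwv hwu huv.symm, by simp [hAC]⟩
  · obtain ⟨B, C', rfl, hB, hC'⟩ := hC.exists_split hvC hvy
    rw [hC.formPerm_eq_formPerm hl.nodup ⟨A, [], by simp [hAC]⟩ hvC hvy] at hC'
    have hnodup := hAC ▸ hl.nodup
    simp only [List.nodup_append', List.disjoint_append_right] at hnodup
    simp only [hAC, List.mem_append, not_or] at hwl
    exact ⟨_, hA.rotation hB hC' hnodup.2.2.1 hnodup.2.2.2 hnodup.2.1.2.2 hwU hwl.1 hwl.2.1 hwl.2.2
      hwu hwv huv, by simp [hAC]⟩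

end Paths

section Hamilton

variable {V : Type*} {G : SimpleGraph V} {U : Finset V} {x y w : V} {l : List V} {m : ℕ}

theorem IsJoined.exists_path (hJ : IsJoined G m) (hdeg : ∀ v ∈ U, 2 * m + 1 ≤ #(nbrsIn G U v))
    (hx : x ∈ U) (hy : y ∈ U) : ∃ l, IsPathBetween G U x y l := by
  classical
  obtain rfl | hxy := eq_or_ne x y
  · exact ⟨[x], isPathBetween_singleton hx⟩
  have herase : ∀ u v, u ∈ U → 2 * m ≤ #((nbrsIn G U u).erase v) := fun u v hu => by
    have := hdeg u hu
    have := pred_card_le_card_erase (s := nbrsIn G U u) (a := v)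
    omega
  obtain ⟨c, hc, d, hd, hcd⟩ := hJ.exists_adj (by linarith [herase x y hx]) (herase y x hy)
  simp only [mem_erase, mem_nbrsIn] at hc hd
  refine ⟨[x, c, d, y], ⟨?_, ?_, ?_⟩, rfl, rfl⟩
  · simp [hxy, hd.1.symm, hc.1, hcd.ne, hc.2.2.ne, hd.2.2.ne']
  · simp [hc.2.2, hcd, hd.2.2.symm]
  · simp [hx, hy, hc.2.1, hd.2.1]

theorem IsJoined.exists_longer_of_nbrs [DecidableEq V] (hJ : IsJoined G m)
    (hl : IsPathBetween G U x y l) (hwU : w ∈ U) (hwl : w ∉ l)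
    (hw : 2 * m + 1 ≤ #(nbrsIn G l.toFinset w)) :
    ∃ l', IsPathBetween G U x y l' ∧ l.length < l'.length := by
  let S := ((nbrsIn G l.toFinset w).erase y).map l.formPerm.toEmbedding
  have hS : 2 * m ≤ #S := by
    have := pred_card_le_card_erase (s := nbrsIn G l.toFinset w) (a := y)
    rw [card_map]
    omega
  obtain ⟨u', hu', v', hv', huv⟩ := hJ.exists_adj (A := S) (by omega) hS
  simp only [S, mem_map, mem_erase, mem_nbrsIn, List.mem_toFinset] at hu' hv'
  obtain ⟨u, ⟨huy, hul, hwu⟩, rfl⟩ := hu'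
  obtain ⟨v, ⟨hvy, hvl, hwv⟩, rfl⟩ := hv'
  exact hl.exists_longer_of_adj_formPerm hwU hwl hul huy hvl hvy hwu hwv huv

/-- Fewer than `m` vertices of the path have no neighbour in `U \ l`. If no consecutive pair were
attached to `U \ l`, the successor map would send all other vertices to those, so the path would
be so short that all its vertices have neighbours in `U \ l`. -/
theorem IsJoined.exists_adj_adj_formPerm [DecidableEq V] (hJ : IsJoined G m)
    (hl : IsPathBetween G U x y l) (hxy : x ≠ y) (hO : m ≤ #(U \ l.toFinset))
    (hdeg : ∀ v ∈ U, 2 * m ≤ #(nbrsIn G U v)) :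
    ∃ u ∈ l, u ≠ y ∧ ∃ a ∈ U \ l.toFinset, ∃ b ∈ U \ l.toFinset,
      G.Adj u a ∧ G.Adj (l.formPerm u) b := by
  classical
  by_contra! hno
  let X : Finset V := {v ∈ l.toFinset | ∀ a ∈ U \ l.toFinset, ¬ G.Adj v a}
  have hX : #X < m := by
    by_contra! hX
    obtain ⟨v, hv, a, ha, hva⟩ := hJ.exists_adj_of_disjoint
      (disjoint_sdiff.mono_left (filter_subset _ _)) hX hO
    exact (mem_filter.1 hv).2 a ha hva
  have hsucc : ∀ u ∈ (l.toFinset \ X).erase y, l.formPerm u ∈ X := by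
    intro u hu
    obtain ⟨huy, hu⟩ := mem_erase.1 hu
    obtain ⟨hul, huX⟩ := mem_sdiff.1 hu
    obtain ⟨a, ha, hua⟩ : ∃ a ∈ U \ l.toFinset, G.Adj u a := by
      by_contra! hnone
      exact huX (mem_filter.2 ⟨hul, hnone⟩)
    rw [List.mem_toFinset] at hul
    exact mem_filter.2 ⟨List.mem_toFinset.2 (List.formPerm_apply_mem_of_mem hul),
      fun b hb => hno u hul huy a ha b hb hua⟩
  have hshort : l.length + 1 ≤ 2 * m := by
    have hinj := card_le_card_of_injOn _ hsucc l.formPerm.injective.injOn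
    have herase := pred_card_le_card_erase (s := l.toFinset \ X) (a := y)
    have hsdiff := le_card_sdiff X l.toFinset
    rw [List.toFinset_card_of_nodup hl.nodup] at hsdiff
    omega
  have hXempty : ∀ v ∈ l, v ∉ X := by
    intro v hv hvX
    have hcard := card_nbrsIn_le_card_sdiff_add (G := G) U l.toFinset v
    have hlen := List.toFinset_card_le l
    have := hdeg v (hl.subset v hv)
    obtain ⟨a, ha⟩ := card_pos.1 (show 0 < #(nbrsIn G (U \ l.toFinset) v) by omega)
    rw [mem_nbrsIn] at ha
    exact (mem_filter.1 hvX).2 a ha.1 ha.2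
  exact hXempty _ (List.formPerm_apply_mem_of_mem hl.head_mem) (hsucc x (by
    simp [hxy, hl.head_mem, hXempty x hl.head_mem]))

theorem IsJoined.exists_longer (hJ : IsJoined G m)
    (hdeg : ∀ v ∈ U, 4 * m + 2 ≤ #(nbrsIn G U v)) (hl : IsPathBetween G U x y l) (hxy : x ≠ y)
    (hw : w ∈ U) (hwl : w ∉ l) : ∃ l', IsPathBetween G U x y l' ∧ l.length < l'.length := by
  classical
  by_cases hmany : ∃ z ∈ U, z ∉ l ∧ 2 * m + 1 ≤ #(nbrsIn G l.toFinset z)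
  · obtain ⟨z, hzU, hzl, hz⟩ := hmany
    exact hJ.exists_longer_of_nbrs hl hzU hzl hz
  push Not at hmany
  have hdegO : ∀ v ∈ U \ l.toFinset, 2 * m + 1 ≤ #(nbrsIn G (U \ l.toFinset) v) := by
    intro v hv
    simp only [mem_sdiff, List.mem_toFinset] at hv
    have hsum := card_nbrsIn_le_add (G := G) (U := U) (T := U \ l.toFinset) (W := l.toFinset)
      (by simp) v
    have := hdeg v hv.1
    have := hmany v hv.1 hv.2
    omega
  have hO : m ≤ #(U \ l.toFinset) := by
    have := hdegO w (by simp [hw, hwl])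
    have := card_le_card (nbrsIn_subset (G := G) (U \ l.toFinset) w)
    omega
  obtain ⟨u, hul, huy, a, ha, b, hb, hua, hub⟩ := hJ.exists_adj_adj_formPerm hl hxy hO
    fun v hv => by linarith [hdeg v hv]
  obtain ⟨M, hM⟩ := hJ.exists_path hdegO ha hb
  obtain ⟨l', hl', hlen⟩ := hl.insert_of_adj hul huy (hM.mono sdiff_subset)
    (fun v hvM hvl => (mem_sdiff.1 (hM.subset v hvM)).2 (List.mem_toFinset.2 hvl)) hua hub
  exact ⟨l', hl', by have := List.length_pos_of_mem hM.head_mem; omega⟩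

theorem IsJoined.exists_hamiltonian_path [DecidableEq V] (hJ : IsJoined G m)
    (hdeg : ∀ v ∈ U, 4 * m + 2 ≤ #(nbrsIn G U v)) (hx : x ∈ U) (hy : y ∈ U) (hxy : x ≠ y) :
    ∃ l, IsPathBetween G U x y l ∧ l.toFinset = U := by
  have hlong : ∀ k ≤ #U, ∃ l, IsPathBetween G U x y l ∧ k ≤ l.length := by
    intro k
    induction k with
    | zero =>
      obtain ⟨l, hl⟩ := hJ.exists_path (fun v hv => by linarith [hdeg v hv]) hx hy
      exact fun _ => ⟨l, hl, Nat.zero_le _⟩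
    | succ k ih =>
      intro hk
      obtain ⟨l, hl, hkl⟩ := ih (by omega)
      by_cases hcover : U ⊆ l.toFinset
      · exact ⟨l, hl, hk.trans ((card_le_card hcover).trans (List.toFinset_card_le l))⟩
      · obtain ⟨w, hw, hwl⟩ := not_subset.1 hcover
        obtain ⟨l', hl', hlt⟩ := hJ.exists_longer hdeg hl hxy hw (by simpa using hwl)
        exact ⟨l', hl', by omega⟩
  obtain ⟨l, hl, hlen⟩ := hlong #U le_rfl
  rw [← List.toFinset_card_of_nodup hl.nodup] at hlen
  exact ⟨l, hl, eq_of_subset_of_card_le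
    (fun v hv => hl.subset v (List.mem_toFinset.1 hv)) hlen⟩

end Hamilton

section Shortcut

variable {V : Type*} {G : SimpleGraph V} {U W Z : Finset V} {x y z : V} {l l' : List V} {m : ℕ}

/-- The two neighbours of `z` on the path `l` are adjacent in `G`, so that `z` can be removed from
the path. -/
def HasShortcut (G : SimpleGraph V) (l : List V) (z : V) : Prop :=
  ∃ u v, [u, z, v] <:+: l ∧ G.Adj u v

theorem HasShortcut.mono (h : HasShortcut G l z) (hl : l <:+: l') : HasShortcut G l' z := by
  obtain ⟨u, v, huv, hadj⟩ := h
  exact ⟨u, v, huv.trans hl, hadj⟩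

theorem HasShortcut.mem (h : HasShortcut G l z) : z ∈ l := by
  obtain ⟨u, v, huv, -⟩ := h
  exact huv.subset (by simp)

theorem HasShortcut.of_isInfix (h : HasShortcut G l z) (hl : l.Nodup) (hl' : l' <:+: l)
    (hz : z ∈ l') (hhead : l'.head? ≠ some z) (hlast : l'.getLast? ≠ some z) :
    HasShortcut G l' z := by
  classical
  obtain ⟨u, v, huv, hadj⟩ := h
  obtain ⟨A, C, rfl⟩ := List.append_of_mem hz
  obtain rfl | ⟨A, u', rfl⟩ := List.eq_nil_or_concat A
  · simp at hhead
  obtain _ | ⟨v', C⟩ := C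
  · simp at hlast
  have huz' : [u', z] <:+: A.concat u' ++ z :: v' :: C := ⟨A, v' :: C, by simp⟩
  have hzv' : [z, v'] <:+: A.concat u' ++ z :: v' :: C := ⟨A ++ [u'], C, by simp⟩
  have huz : [u, z] <:+: [u, z, v] := ⟨[], [v], rfl⟩
  have hzv : [z, v] <:+: [u, z, v] := ⟨[u], [], rfl⟩
  have hpred : u' = u := l.formPerm.injective <| by
    rw [formPerm_eq_of_isInfix hl (huz'.trans hl'), formPerm_eq_of_isInfix hl (huz.trans huv)]
  have hsucc : v' = v := by
    rw [← formPerm_eq_of_isInfix hl (hzv'.trans hl'), formPerm_eq_of_isInfix hl (hzv.trans huv)]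
  exact ⟨u', v', ⟨A, C, by simp⟩, by rwa [hpred, hsucc]⟩

theorem IsPathBetween.erase [DecidableEq V] (hl : IsPathBetween G U x y l)
    (hz : HasShortcut G l z) : IsPathBetween G U x y (l.erase z) := by
  obtain ⟨u, v, ⟨A, C, rfl⟩, huv⟩ := hz
  have hnodup := hl.nodup
  have hne : A ++ [u] ≠ [] ∧ v :: C ≠ [] := by simp
  have hl_eq : A ++ [u, z, v] ++ C = (A ++ [u]) ++ z :: v :: C := by simp
  rw [hl_eq] at hl hnodup ⊢
  rw [List.erase_append_right _ fun hz => List.disjoint_of_nodup_append hnodup hz (by simp),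
    List.erase_cons_head]
  refine { nodup := ?_, isChain := ?_, subset := fun w hw => hl.subset w ?_,
           head?_eq := ?_, getLast?_eq := ?_ }
  · exact hnodup.sublist (List.Sublist.append_left (List.sublist_cons_self z _) _)
  · refine List.isChain_append.2 ⟨hl.isChain.left_of_append, hl.isChain.right_of_append.tail, ?_⟩
    simpa using huv
  · exact (List.Sublist.append_left (List.sublist_cons_self z _) _).subset hw
  · simpa [List.head?_append] using hl.head?_eq
  · simpa [List.getLast?_append] using hl.getLast?_eq

theorem IsPathBetween.filter_notMem [DecidableEq V] {X : Finset V} (hl : IsPathBetween G U x y l)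
    (hX : ∀ z ∈ X, z ∈ l → HasShortcut G l z)
    (hone : ∀ z ∈ X, ∀ z' ∈ X, z ∈ l → z' ∈ l → z = z') :
    IsPathBetween G U x y (l.filter (· ∉ X)) ∧ l.length ≤ (l.filter (· ∉ X)).length + 1 := by
  by_cases hex : ∃ z ∈ X, z ∈ l
  · obtain ⟨z, hzX, hzl⟩ := hex
    have hfilter : l.filter (· ∉ X) = l.erase z := by
      rw [hl.nodup.erase_eq_filter]
      refine List.filter_congr fun w hw => ?_
      have : w ∈ X ↔ w = z := ⟨fun hwX => hone w hwX z hzX hw hzl, fun h => h ▸ hzX⟩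
      by_cases hwz : w = z <;> simp [this, hwz, hzX]
    rw [hfilter]
    have := List.length_pos_of_mem hzl
    exact ⟨hl.erase (hX z hzX hzl), by rw [List.length_erase_of_mem hzl]; omega⟩
  · push Not at hex
    rw [List.filter_eq_self.2 fun w hw => by simpa using fun hwX => hex w hwX hw]
    exact ⟨hl, Nat.le_succ _⟩

theorem IsJoined.exists_segment_with_shortcut [DecidableEq V] (hJ : IsJoined G m) {F : Finset V}
    {e : V} (hzF : z ∉ F) (hdeg : ∀ w ∈ F, 2 * m + 2 ≤ #(nbrsIn G F w))
    (he : 2 * m + 2 ≤ #(nbrsIn G F e)) (hz : 2 * m ≤ #(nbrsIn G F z)) :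
    ∃ a v P, IsPathBetween G (insert z F) a v P ∧ P.length = 5 ∧ G.Adj e a ∧
      HasShortcut G P z := by
  obtain ⟨u, hu, v, hv, huv⟩ := hJ.exists_adj (A := nbrsIn G F z) (by omega) hz
  rw [mem_nbrsIn] at hu hv
  have hsdiff : ∀ w, 2 * m + 2 ≤ #(nbrsIn G F w) → 2 * m ≤ #(nbrsIn G F w \ {u, v}) := by
    intro w hw
    have := le_card_sdiff {u, v} (nbrsIn G F w)
    have := card_le_two (a := u) (b := v)
    omega
  obtain ⟨a, ha, b, hb, hab⟩ := hJ.exists_adj (A := nbrsIn G F e \ {u, v})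
    (by linarith [hsdiff e he]) (hsdiff u (hdeg u hu.1))
  simp only [mem_sdiff, mem_nbrsIn, mem_insert, mem_singleton, not_or] at ha hb
  have hne : ∀ w ∈ F, w ≠ z := fun w hw h => hzF (h ▸ hw)
  refine ⟨a, v, [a, b, u, z, v], ⟨⟨?_, ?_, ?_⟩, rfl, rfl⟩, rfl, ha.1.2, u, v,
    ⟨[a, b], [], rfl⟩, huv⟩
  · simp [hab.ne, ha.2, hb.2, hne a ha.1.1, hne b hb.1.1, hne u hu.1, (hne v hv.1).symm, huv.ne]
  · simp [hab, hb.1.2.symm, hu.2.symm, hv.2]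
  · simp [ha.1.1, hb.1.1, hu.1, hv.1]

theorem IsJoined.exists_path_with_shortcuts (hJ : IsJoined G m) (hZW : Z ⊆ W)
    (hdeg : ∀ v ∈ W, 6 * #Z + 2 * m + 2 ≤ #(nbrsIn G W v)) (hx : x ∈ W) (hxZ : x ∉ Z) :
    ∃ e l, IsPathBetween G W x e l ∧ l.length = 5 * #Z + 1 ∧ ∀ z ∈ Z, HasShortcut G l z := by
  classical
  suffices hsub : ∀ Z' ⊆ Z, ∃ e l, IsPathBetween G (W \ (Z \ Z')) x e l ∧
      l.length = 5 * #Z' + 1 ∧ ∀ z ∈ Z', HasShortcut G l z by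
    obtain ⟨e, l, hl, hlen, hshort⟩ := hsub Z subset_rfl
    exact ⟨e, l, hl.mono sdiff_subset, hlen, hshort⟩
  intro Z'
  induction Z' using Finset.induction_on with
  | empty => exact fun _ => ⟨x, [x], isPathBetween_singleton (by simp [hx, hxZ]), by simp, by simp⟩
  | insert z Z' hz ih =>
    intro hZ'
    rw [insert_subset_iff] at hZ'
    obtain ⟨e, Q, hQ, hlen, hshort⟩ := ih hZ'.2
    have hlt : #Z' < #Z := card_lt_card (hZ'.2.ssubset_of_mem_notMem hZ'.1 hz)
    have hF : ∀ w ∈ W, 2 * m + 2 ≤ #(nbrsIn G ((W \ Z) \ Q.toFinset) w) := fun w hw => by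
      have := hdeg w hw
      have := card_nbrsIn_le_card_sdiff_add (G := G) W Z w
      have := card_nbrsIn_le_card_sdiff_add (G := G) (W \ Z) Q.toFinset w
      have := Q.toFinset_card_le
      omega
    have heW := (mem_sdiff.1 (hQ.subset e hQ.getLast_mem)).1
    obtain ⟨a, v, P, hP, hPlen, hea, hPz⟩ := hJ.exists_segment_with_shortcut (z := z) (by
      simp [hZ'.1]) (fun w hw => hF w (by grind)) (hF e heW) (by linarith [hF z (hZW hZ'.1)])
    have hdisj : Q.Disjoint P := by
      intro w hwQ hwP
      have hwP := hP.subset w hwP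
      have hwQ' := hQ.subset w hwQ
      simp only [mem_insert, mem_sdiff, List.mem_toFinset] at hwP hwQ'
      grind
    refine ⟨v, Q ++ P, (hQ.mono (by grind)).append (hP.mono ?_) hea hdisj, ?_, ?_⟩
    · have := hZW hZ'.1
      grind
    · rw [List.length_append, hlen, hPlen, card_insert_of_notMem hz]
      ring
    · intro c hc
      obtain rfl | hc := mem_insert.1 hc
      exacts [hPz.mono (List.suffix_append Q P).isInfix,
        (hshort c hc).mono (List.prefix_append Q P).isInfix]

theorem IsJoined.exists_path_of_length_with_shortcuts (hJ : IsJoined G m) (hZW : Z ⊆ W)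
    (hdeg : ∀ v ∈ W, 6 * #Z + 4 * m + 4 ≤ #(nbrsIn G W v)) {k : ℕ} (hZk : 5 * #Z + 1 ≤ k)
    (hkW : k ≤ #W) :
    ∃ l, IsPathIn G W l ∧ l.length = k ∧ ∀ z ∈ Z, HasShortcut G l z := by
  classical
  obtain ⟨x, hx, hxZ⟩ := exists_mem_notMem_of_card_lt_card (show #Z < #W by omega)
  obtain ⟨e, Q, hQ, hQlen, hQshort⟩ := hJ.exists_path_with_shortcuts hZW
    (fun v hv => by linarith [hdeg v hv]) hx hxZ
  have hrest : ∀ v ∈ W, 4 * m + 2 ≤ #(nbrsIn G (W \ Q.toFinset) v) := fun v hv => by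
    have := hdeg v hv
    have := card_nbrsIn_le_card_sdiff_add (G := G) W Q.toFinset v
    have := Q.toFinset_card_le
    omega
  obtain ⟨a, ha, b, hb, hab⟩ := one_lt_card.1
    (lt_of_lt_of_le (by omega) (hrest e (hQ.subset e hQ.getLast_mem)))
  rw [mem_nbrsIn] at ha hb
  obtain ⟨R, hR, hRcover⟩ := hJ.exists_hamiltonian_path
    (fun v hv => hrest v (mem_sdiff.1 hv).1) ha.1 hb.1 hab
  have hdisj : Q.Disjoint R := fun v hvQ hvR =>
    (mem_sdiff.1 (hR.subset v hvR)).2 (List.mem_toFinset.2 hvQ)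
  have hQR := hQ.append (hR.mono sdiff_subset) ha.2 hdisj
  have hlen : (Q ++ R).length = #W := by
    rw [← List.toFinset_card_of_nodup hQR.nodup, List.toFinset_append, hRcover,
      union_sdiff_of_subset fun v hv => hQ.subset v (List.mem_toFinset.1 hv)]
  have htake : ((Q ++ R).take k).length = k := by rw [List.length_take, hlen, min_eq_left hkW]
  have hprefix : Q <+: (Q ++ R).take k :=
    List.prefix_of_prefix_length_le (List.prefix_append Q R) (List.take_prefix k _) (by omega)
  exact ⟨(Q ++ R).take k, hQR.toIsPathIn.of_isInfix (List.take_prefix k _).isInfix, htake,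
    fun z hz => (hQshort z hz).mono hprefix.isInfix⟩

end Shortcut

section RandomReservoir

variable {V : Type*}

section Classes

variable {γ κ : Type*} [Fintype γ] [DecidableEq γ] [Fintype κ]

theorem sum_half_pow_card_fiber [Fintype V] [DecidableEq V] (N : Finset V) (i : γ) :
    ∑ f : V → γ, (1 / 2 : ℝ) ^ #{u ∈ N | f u = i} =
      (Fintype.card γ) ^ (Fintype.card V - #N) * (Fintype.card γ - 1 / 2 : ℝ) ^ #N := by
  have hprod : ∀ f : V → γ, (1 / 2 : ℝ) ^ #{u ∈ N | f u = i} =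
      ∏ u, if u ∈ N then 1 - (if f u = i then 1 / 2 else 0) else (1 : ℝ) := fun f => by
    rw [prod_ite_mem, univ_inter, ← prod_const, prod_filter]
    exact prod_congr rfl fun u _ => by split_ifs <;> norm_num
  have hfactor : ∀ u, ∑ j : γ, (if u ∈ N then 1 - (if j = i then 1 / 2 else 0) else (1 : ℝ)) =
      if u ∈ N then (Fintype.card γ - 1 / 2 : ℝ) else Fintype.card γ := fun u => by
    split_ifs <;> simp [sum_sub_distrib]
  have hswap := prod_univ_sum (fun _ : V => (univ : Finset γ))
    (fun u j => if u ∈ N then 1 - (if j = i then 1 / 2 else 0) else (1 : ℝ))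
  rw [Fintype.piFinset_univ] at hswap
  simp only [hprod, ← hswap, hfactor]
  rw [prod_ite, prod_const, prod_const, mul_comm, filter_mem_eq_inter, univ_inter, filter_not,
    filter_mem_eq_inter, univ_inter, card_univ_sdiff]

theorem sum_half_pow_card_fiber_le [Fintype V] [DecidableEq V] [Nonempty γ] {N : Finset V} {x : ℕ}
    (hN : 4 * Fintype.card γ * x ≤ #N) (i : γ) :
    ∑ f : V → γ, (1 / 2 : ℝ) ^ #{u ∈ N | f u = i} ≤
      (Fintype.card γ) ^ (Fintype.card V) * (1 / 4) ^ x := by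
  set q := Fintype.card γ with hq
  have hqpos : 0 < q := Fintype.card_pos
  have hq1 : (1 : ℝ) ≤ q := by exact_mod_cast hqpos
  let a : ℝ := 1 - 1 / ((2 * q : ℕ) : ℝ)
  have hqa : (q - 1 / 2 : ℝ) = q * a := by
    simp only [a]
    push_cast
    field_simp
  have ha0 : 0 ≤ a := sub_nonneg.2 (by
    push_cast
    rw [div_le_one (by positivity)]
    linarith)
  have ha1 : a ≤ 1 := sub_le_self 1 (by positivity)
  have hahalf : a ^ (2 * q) ≤ 1 / 2 :=
    (Real.one_sub_div_pow_le_exp_neg (by exact_mod_cast (by omega : 1 ≤ 2 * q))).trans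
      Real.exp_neg_one_lt_half.le
  have hapow : a ^ #N ≤ (1 / 4) ^ x := calc
    a ^ #N ≤ a ^ (2 * q * (2 * x)) := pow_le_pow_of_le_one ha0 ha1 (by linarith)
    _ = (a ^ (2 * q)) ^ (2 * x) := pow_mul _ _ _
    _ ≤ (1 / 2) ^ (2 * x) := by gcongr
    _ = (1 / 4) ^ x := by rw [pow_mul]; norm_num
  calc ∑ f : V → γ, (1 / 2 : ℝ) ^ #{u ∈ N | f u = i}
      = q ^ (Fintype.card V - #N) * (q * a) ^ #N := by
        rw [sum_half_pow_card_fiber, ← hq, hqa]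
    _ = q ^ Fintype.card V * a ^ #N := by
        rw [mul_pow, ← mul_assoc, ← pow_add, Nat.sub_add_cancel (card_le_univ N)]
    _ ≤ q ^ Fintype.card V * (1 / 4) ^ x := by gcongr

/-- In a uniformly random partition, the number `#{u ∈ N k | f u = i}` is binomial with mean at
least `4 * x`; the union bound is applied to the exponential moments with base `1 / 2`. -/
theorem exists_forall_le_card_fiber [Finite V] [Nonempty γ] (N : κ → Finset V) {x : ℕ}
    (hN : ∀ k, 4 * Fintype.card γ * x ≤ #(N k))
    (hx : Fintype.card κ * Fintype.card γ < 2 ^ x) :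
    ∃ f : V → γ, ∀ k i, x ≤ #{u ∈ N k | f u = i} := by
  classical
  have := Fintype.ofFinite V
  by_contra! hfew
  let weight (f : V → γ) (b : κ × γ) : ℝ := (1 / 2) ^ #{u ∈ N b.1 | f u = b.2}
  have hlower : ∀ f : V → γ, (1 / 2 : ℝ) ^ x ≤ ∑ b, weight f b := fun f => by
    obtain ⟨k, i, hki⟩ := hfew f
    exact (pow_le_pow_of_le_one (by norm_num) (by norm_num) hki.le).trans
      (single_le_sum (f := weight f) (fun _ _ => by positivity) (mem_univ (k, i)))
  have hcard : (Fintype.card κ * Fintype.card γ : ℝ) < 2 ^ x := by exact_mod_cast hx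
  have hpos : (0 : ℝ) < Fintype.card γ := by exact_mod_cast Fintype.card_pos (α := γ)
  refine lt_irrefl ((Fintype.card γ : ℝ) ^ Fintype.card V * (1 / 2) ^ x) ?_
  calc ((Fintype.card γ : ℝ) ^ Fintype.card V * (1 / 2) ^ x)
      = ∑ _f : V → γ, (1 / 2 : ℝ) ^ x := by simp
    _ ≤ ∑ f : V → γ, ∑ b, weight f b := sum_le_sum fun f _ => hlower f
    _ = ∑ b, ∑ f : V → γ, weight f b := sum_comm
    _ ≤ ∑ _b : κ × γ, (Fintype.card γ : ℝ) ^ Fintype.card V * (1 / 4) ^ x :=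
        sum_le_sum fun b _ => sum_half_pow_card_fiber_le (hN b.1) b.2
    _ = (Fintype.card γ : ℝ) ^ Fintype.card V *
          ((Fintype.card κ * Fintype.card γ) * (1 / 4) ^ x) := by
        simp only [sum_const, card_univ, Fintype.card_prod, nsmul_eq_mul, Nat.cast_mul]
        ring
    _ < (Fintype.card γ : ℝ) ^ Fintype.card V * (2 ^ x * (1 / 4) ^ x) :=
        mul_lt_mul_of_pos_left (by gcongr) (pow_pos hpos _)
    _ = (Fintype.card γ : ℝ) ^ Fintype.card V * (1 / 2) ^ x := by rw [← mul_pow]; norm_num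

theorem exists_card_fiber_mul_le [Fintype V] [Nonempty γ] (f : V → γ) :
    ∃ i, #{u | f u = i} * Fintype.card γ ≤ Fintype.card V := by
  have hpos : 0 < Fintype.card γ := Fintype.card_pos
  obtain ⟨i, hi⟩ := Fintype.exists_card_fiber_lt_of_card_lt_mul f
    (Nat.lt_mul_div_succ (Fintype.card V) hpos)
  exact ⟨i, (Nat.le_div_iff_mul_le hpos).1 (Nat.lt_succ_iff.1 hi)⟩

end Classes

theorem exists_reservoir [Fintype V] {G : SimpleGraph V} [DecidableRel G.Adj] {q x : ℕ}
    (hq : 0 < q) (O : Finset V) (hdeg : ∀ v, 4 * q * x + #O ≤ G.degree v)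
    (hx : Fintype.card V * q < 2 ^ x) :
    ∃ S : Finset V, Disjoint S O ∧ #S * q ≤ Fintype.card V ∧ ∀ v, x ≤ #(nbrsIn G S v) := by
  classical
  have : NeZero q := ⟨hq.ne'⟩
  have hN : ∀ v, 4 * Fintype.card (Fin q) * x ≤ #(nbrsIn G (univ \ O) v) := fun v => by
    have hO := card_nbrsIn_le_card_sdiff_add (G := G) univ O v
    have := hdeg v
    rw [card_nbrsIn_univ] at hO
    rw [Fintype.card_fin]
    omega
  obtain ⟨f, hf⟩ := exists_forall_le_card_fiber (γ := Fin q) _ hN (by rwa [Fintype.card_fin])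
  obtain ⟨i, hi⟩ := exists_card_fiber_mul_le f
  rw [Fintype.card_fin] at hi
  refine ⟨({u | f u = i} : Finset V) \ O, sdiff_disjoint,
    (Nat.mul_le_mul_right q (card_le_card sdiff_subset)).trans hi, fun v => (hf v i).trans
      (card_le_card fun u => ?_)⟩
  simp only [mem_filter, mem_nbrsIn, mem_sdiff, mem_univ, true_and]
  tauto

end RandomReservoir

section Pieces

variable {α : Type*}

theorem exists_flatten_ofFn_eq {k : ℕ} (l : List α) (d : Fin k → ℕ)
    (hd : ∑ r, d r = l.length) :
    ∃ P : Fin k → List α, (List.ofFn P).flatten = l ∧ ∀ r, (P r).length = d r := by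
  induction k generalizing l with
  | zero => exact ⟨fun _ => [], by simpa [eq_comm] using hd, fun r => r.elim0⟩
  | succ k ih =>
    rw [Fin.sum_univ_succ] at hd
    obtain ⟨P, hP, hlen⟩ := ih (l.drop (d 0)) (fun r => d r.succ) (by
      rw [List.length_drop]
      omega)
    refine ⟨Fin.cons (l.take (d 0)) P, by simp [List.ofFn_succ, hP], Fin.cases ?_ hlen⟩
    rw [Fin.cons_zero, List.length_take]
    omega

variable {k : ℕ} {P : Fin k → List α}

theorem mem_flatten_ofFn {v : α} : v ∈ (List.ofFn P).flatten ↔ ∃ r, v ∈ P r := by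
  simp [List.mem_flatten, List.mem_ofFn]

theorem isInfix_flatten_ofFn (r : Fin k) : P r <:+: (List.ofFn P).flatten :=
  List.infix_of_mem_flatten (List.mem_ofFn.2 ⟨r, rfl⟩)

theorem eq_of_mem_of_nodup_flatten_ofFn (hP : (List.ofFn P).flatten.Nodup) {r r' : Fin k} {v : α}
    (hr : v ∈ P r) (hr' : v ∈ P r') : r = r' := by
  have hdisj := List.pairwise_ofFn.1 (List.nodup_flatten.1 hP).2
  rcases lt_trichotomy r r' with h | h | h
  exacts [(hdisj h hr hr').elim, h, (hdisj h hr' hr).elim]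

theorem head?_flatten_ofFn {P : Fin (k + 1) → List α} (h : P 0 ≠ []) :
    (List.ofFn P).flatten.head? = (P 0).head? := by
  rw [List.ofFn_succ, List.flatten_cons, List.head?_append_of_ne_nil _ h]

theorem getLast?_flatten_ofFn {P : Fin (k + 1) → List α} (h : P (Fin.last k) ≠ []) :
    (List.ofFn P).flatten.getLast? = (P (Fin.last k)).getLast? := by
  rw [List.ofFn_succ', List.concat_eq_append, List.flatten_concat,
    List.getLast?_append_of_ne_nil _ h]

end Pieces

section Linkage

variable {V ι : Type*} {G : SimpleGraph V} {B : Finset V} {s s' : ι → V} {I : ι → List V}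

/-- A `B`-linkage: the lists `I r` are the interiors of internally disjoint paths from `s r` to
`s' r`, and these interiors partition the complement of `B`. -/
structure IsLinkage (G : SimpleGraph V) (B : Finset V) (s s' : ι → V) (I : ι → List V) :
    Prop where
  isChain : ∀ r, (s r :: (I r ++ [s' r])).IsChain G.Adj
  nodup : ∀ r, (I r).Nodup
  eq_of_mem : ∀ {r r' v}, v ∈ I r → v ∈ I r' → r = r'
  exists_mem_iff : ∀ v, (∃ r, v ∈ I r) ↔ v ∉ B

theorem IsLinkage.comp_equiv {ι' : Type*} (e : ι' ≃ ι) (h : IsLinkage G B s s' I) :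
    IsLinkage G B (s ∘ e) (s' ∘ e) (I ∘ e) where
  isChain r := h.isChain (e r)
  nodup r := h.nodup (e r)
  eq_of_mem hr hr' := e.injective (h.eq_of_mem hr hr')
  exists_mem_iff v := by
    rw [← h.exists_mem_iff v]
    exact e.exists_congr_left.trans (by simp)

theorem IsLinkage.notMem (h : IsLinkage G B s s' I) {v : V} (hv : v ∈ B) (r : ι) : v ∉ I r :=
  fun hr => (h.exists_mem_iff v).1 ⟨r, hr⟩ hv

theorem IsLinkage.exists_walk (h : IsLinkage G B s s' I) (r : ι) :
    ∃ w : G.Walk (s r) (s' r), w.support = s r :: (I r ++ [s' r]) :=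
  ⟨(Walk.ofSupport _ (List.cons_ne_nil _ _) (h.isChain r)).copy List.head_cons
      (by simp), by
    rw [Walk.support_copy, Walk.support_ofSupport]⟩

theorem IsLinkage.exists_isPath (h : IsLinkage G B s s' I) (hs : ∀ r, s r ∈ B)
    (hs' : ∀ r, s' r ∈ B) (hne : ∀ r, s r ≠ s' r) (r : ι) :
    ∃ w : G.Walk (s r) (s' r), w.IsPath ∧ w.length = (I r).length + 1 ∧
      ∀ v, v ∈ w.support ↔ v = s r ∨ v ∈ I r ∨ v = s' r := by
  obtain ⟨w, hw⟩ := h.exists_walk r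
  refine ⟨w, ?_, ?_, by simp [hw]⟩
  · rw [Walk.isPath_def, hw]
    simpa [List.nodup_append, h.nodup r, h.notMem (hs r) r, hne r] using
      fun v hv (hvs : v = s' r) => h.notMem (hs' r) r (hvs ▸ hv)
  · have := congrArg List.length hw
    simpa [Walk.length_support] using this

theorem IsLinkage.hasSpanningNearlyBalancedKSubdivision {t ℓ : ℕ} (ht : 2 ≤ t) (b : Fin t ↪ V)
    {I : {p : Fin t × Fin t // p.1 < p.2} → List V}
    (h : IsLinkage G (univ.map b) (fun p => b p.1.1) (fun p => b p.1.2) I)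
    (hlen : ∀ p, ℓ ≤ (I p).length + 1 ∧ (I p).length ≤ ℓ + 1) :
    HasSpanningNearlyBalancedKSubdivision G t := by
  have hb : ∀ i, b i ∈ univ.map b := fun i => mem_map_of_mem b (mem_univ i)
  choose W hpath hWlen hmem using h.exists_isPath (fun p => hb p.1.1) (fun p => hb p.1.2)
    fun p => b.injective.ne p.2.ne
  refine ⟨b, fun i j hij => W ⟨(i, j), hij⟩, fun _ _ _ => hpath _, fun i j hij k hki hkj hk => ?_,
    fun i j hij i' j' hij' hne v hv hv' => ?_, fun v => ?_, ℓ + 1, by omega, fun i j hij => ?_⟩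
  · rcases (hmem _ _).1 hk with heq | hI | heq
    exacts [hki (b.injective heq), h.notMem (hb k) _ hI, hkj (b.injective heq)]
  · rcases (hmem _ _).1 hv with heq | hI | heq
    · exact ⟨i, heq⟩
    · rcases (hmem _ _).1 hv' with heq' | hI' | heq'
      · exact ⟨i', heq'⟩
      · have heq := h.eq_of_mem hI hI'
        simp only [Subtype.mk.injEq, Prod.mk.injEq] at heq
        exact (hne heq).elim
      · exact ⟨j', heq'⟩
    · exact ⟨j, heq⟩
  · by_cases hv : v ∈ univ.map b
    · obtain ⟨i, -, rfl⟩ := mem_map.1 hv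
      have : Nontrivial (Fin t) := Fin.nontrivial_iff_two_le.2 ht
      obtain ⟨j, hji⟩ := exists_ne i
      rcases hji.lt_or_gt with hlt | hlt
      exacts [⟨j, i, hlt, (hmem _ _).2 (Or.inr (Or.inr rfl))⟩,
        ⟨i, j, hlt, (hmem _ _).2 (Or.inl rfl)⟩]
    · obtain ⟨p, hp⟩ := (h.exists_mem_iff v).2 hv
      exact ⟨p.1.1, p.1.2, p.2, (hmem _ _).2 (Or.inr (Or.inl hp))⟩
  · have := hlen ⟨(i, j), hij⟩
    rw [hWlen]
    omega

end Linkage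

section Assembly

variable {V ι : Type*} {G : SimpleGraph V}

/-- In a linkage with middle piece from `hd r` to `tl r`, slot `(r, false)` is the link from `s r`
to `hd r` and slot `(r, true)` the link from `tl r` to `s' r`; this is the start of the link. -/
def linkStart (s tl : ι → V) (c : ι × Bool) : V := cond c.2 (tl c.1) (s c.1)

/-- The end of the link in a slot; see `linkStart`. -/
def linkEnd (hd s' : ι → V) (c : ι × Bool) : V := cond c.2 (s' c.1) (hd c.1)

/-- The piece `F r` together with the inner vertices of the links in the two slots of `r`. -/
def linkedPath (h : (ι × Bool) × Bool → V) (F : ι → List V) (r : ι) : List V :=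
  h ((r, false), false) :: h ((r, false), true) ::
    (F r ++ [h ((r, true), false), h ((r, true), true)])

theorem mem_linkedPath {h : (ι × Bool) × Bool → V} {F : ι → List V} {r : ι} {v : V} :
    v ∈ linkedPath h F r ↔ v ∈ F r ∨ ∃ b b', h ((r, b), b') = v := by
  simp only [linkedPath, List.mem_cons, List.mem_append, List.not_mem_nil, or_false,
    Bool.exists_bool, eq_comm (b := v)]
  tauto

variable {s s' hd tl : ι → V} {U : Finset V} {h : (ι × Bool) × Bool → V}

theorem nodup_linkedPath (hh : Function.Injective h) {F : ι → List V} {r : ι}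
    (hF : (F r).Nodup) (hhF : ∀ a, h a ∉ F r) : (linkedPath h F r).Nodup := by
  have hne : ∀ v ∈ F r, ∀ a, v ≠ h a := fun v hv a hva => hhF a (hva ▸ hv)
  simpa [linkedPath, List.nodup_append, hh.eq_iff, hF, hhF] using
    fun v hv => ⟨hne v hv _, hne v hv _⟩

variable [Fintype ι]

theorem IsLinkSystem.isChain_linkedPath
    (hh : IsLinkSystem G univ (linkStart s tl) (linkEnd hd s') U h) {F : ι → List V} {r : ι}
    (hF : IsPathBetween G U (hd r) (tl r) (F r)) :
    (s r :: (linkedPath h F r ++ [s' r])).IsChain G.Adj := by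
  have hne : F r ≠ [] := List.ne_nil_of_mem hF.head_mem
  simp only [linkedPath, List.cons_append, List.isChain_cons_cons, List.append_assoc,
    List.nil_append]
  rw [List.isChain_cons, List.head?_append_of_ne_nil _ hne, hF.head?_eq, List.isChain_append,
    hF.getLast?_eq]
  simpa [hF.isChain] using ⟨hh.adj_left (r, false) (mem_univ _), hh.adj (r, false) (mem_univ _),
    hh.adj_right (r, false) (mem_univ _), ⟨hh.adj (r, true) (mem_univ _),
      hh.adj_right (r, true) (mem_univ _)⟩, hh.adj_left (r, true) (mem_univ _)⟩

theorem IsLinkSystem.isLinkage_linkedPath [Fintype V] [DecidableEq V] {B : Finset V}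
    (hh : IsLinkSystem G univ (linkStart s tl) (linkEnd hd s') Bᶜ h) {F : ι → List V}
    (hF : ∀ r, IsPathBetween G Bᶜ (hd r) (tl r) (F r))
    (hFeq : ∀ {r r' v}, v ∈ F r → v ∈ F r' → r = r') (hhF : ∀ a r, h a ∉ F r)
    (hcov : ∀ v ∉ B, (∃ r, v ∈ F r) ∨ ∃ a, h a = v) :
    IsLinkage G B s s' (linkedPath h F) where
  isChain r := hh.isChain_linkedPath (hF r)
  nodup r := nodup_linkedPath (by simpa using hh.injOn) (hF r).nodup (hhF · r)
  eq_of_mem {r r' v} hr hr' := by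
    rcases mem_linkedPath.1 hr with hr | ⟨b, c, rfl⟩ <;>
      rcases mem_linkedPath.1 hr' with hr' | ⟨b', c', hb'⟩
    · exact hFeq hr hr'
    · exact (hhF _ r (hb' ▸ hr)).elim
    · exact (hhF _ r' hr').elim
    · have heq := hh.injOn (by simp) (by simp) hb'
      simp only [Prod.mk.injEq] at heq
      exact heq.1.1.symm
  exists_mem_iff v := by
    simp only [mem_linkedPath]
    constructor
    · rintro ⟨r, hr | ⟨b, c, rfl⟩⟩
      exacts [mem_compl.1 ((hF r).subset _ hr), mem_compl.1 (hh.mem _ (mem_univ _))]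
    · intro hv
      rcases hcov v hv with ⟨r, hr⟩ | ⟨⟨⟨r, b⟩, c⟩, hb⟩
      exacts [⟨r, Or.inl hr⟩, ⟨r, Or.inr ⟨b, c, hb⟩⟩]

/-- Deleting from each piece the link vertex that lies on it, if any, makes pieces and links
disjoint and shortens a piece by at most one vertex. -/
theorem IsLinkSystem.exists_isLinkage [Fintype V] [DecidableEq V] {B : Finset V}
    (hh : IsLinkSystem G univ (linkStart s tl) (linkEnd hd s') Bᶜ h) {P : ι → List V}
    (hP : ∀ r, IsPathBetween G Bᶜ (hd r) (tl r) (P r))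
    (hPeq : ∀ {r r' v}, v ∈ P r → v ∈ P r' → r = r')
    (hshort : ∀ a r, h a ∈ P r → HasShortcut G (P r) (h a))
    (hone : ∀ a b r, h a ∈ P r → h b ∈ P r → a = b)
    (hcov : ∀ v ∉ B, (∃ r, v ∈ P r) ∨ ∃ a, h a = v) :
    ∃ I, IsLinkage G B s s' I ∧
      ∀ r, (P r).length + 3 ≤ (I r).length ∧ (I r).length ≤ (P r).length + 4 := by
  classical
  let X := univ.image h
  let F r := (P r).filter (· ∉ X)
  have hmemX : ∀ {v}, v ∈ X ↔ ∃ a, h a = v := by simp [X]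
  have hmemF : ∀ {r v}, v ∈ F r ↔ v ∈ P r ∧ v ∉ X := by simp [F]
  have hF : ∀ r, IsPathBetween G Bᶜ (hd r) (tl r) (F r) ∧ (P r).length ≤ (F r).length + 1 :=
    fun r => (hP r).filter_notMem
      (fun z hz hzP => by
        obtain ⟨a, rfl⟩ := hmemX.1 hz
        exact hshort a r hzP)
      (fun z hz z' hz' hzP hzP' => by
        obtain ⟨a, rfl⟩ := hmemX.1 hz
        obtain ⟨a', rfl⟩ := hmemX.1 hz'
        rw [hone a a' r hzP hzP'])
  refine ⟨linkedPath h F, hh.isLinkage_linkedPath (fun r => (hF r).1)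
    (fun hr hr' => hPeq (hmemF.1 hr).1 (hmemF.1 hr').1)
    (fun a r ha => (hmemF.1 ha).2 (hmemX.2 ⟨a, rfl⟩)) (fun v hv => ?_), fun r => ?_⟩
  · by_cases hvX : v ∈ X
    · exact Or.inr (hmemX.1 hvX)
    · obtain ⟨r, hr⟩ := (hcov v hv).resolve_right (mt hmemX.2 hvX)
      exact Or.inl ⟨r, hmemF.2 ⟨hr, hvX⟩⟩
  · have hFP : (F r).length ≤ (P r).length := List.length_filter_le _ _
    have hPF := (hF r).2
    simp only [linkedPath, List.length_cons, List.length_append, List.length_nil]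
    omega

end Assembly

section Stages

variable {V κ : Type*} {G : SimpleGraph V} {m : ℕ}

theorem IsPathIn.exists_pieces {U : Finset V} {l : List V} (hl : IsPathIn G U l) {k : ℕ}
    {d : Fin k → ℕ} (hd : ∀ r, d r ≠ 0) (hsum : ∑ r, d r = l.length) :
    ∃ (P : Fin k → List V) (hd tl : Fin k → V), (List.ofFn P).flatten = l ∧
      (∀ r, IsPathBetween G U (hd r) (tl r) (P r)) ∧ ∀ r, (P r).length = d r := by
  obtain ⟨P, rfl, hlen⟩ := exists_flatten_ofFn_eq l d hsum
  have hne : ∀ r, P r ≠ [] := fun r hnil => hd r (by rw [← hlen r, hnil, List.length_nil])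
  exact ⟨P, fun r => (P r).head (hne r), fun r => (P r).getLast (hne r), rfl,
    fun r => (hl.of_isInfix (isInfix_flatten_ofFn r)).isPathBetween (hne r), hlen⟩

section LinkVertices

variable [DecidableEq V] {A : Finset κ} {h : κ × Bool → V}

/-- The inner vertices of the links in the slots of `A`. -/
def linkVertices (A : Finset κ) (h : κ × Bool → V) : Finset V := (A ×ˢ univ).image h

theorem mem_linkVertices {v : V} : v ∈ linkVertices A h ↔ ∃ a, a.1 ∈ A ∧ h a = v := by
  simp [linkVertices]

theorem card_linkVertices_le : #(linkVertices A h) ≤ 2 * #A :=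
  card_image_le.trans (by simp [card_product, mul_comm])

theorem IsLinkSystem.linkVertices_subset {p q : κ → V} {Y : Finset V}
    (hA : IsLinkSystem G A p q Y h) : linkVertices A h ⊆ Y := fun v hv => by
  obtain ⟨a, ha, rfl⟩ := mem_linkVertices.1 hv
  exact hA.mem a ha

theorem IsLinkSystem.card_linkVertices {p q : κ → V} {Y : Finset V}
    (hA : IsLinkSystem G A p q Y h) : #(linkVertices A h) = 2 * #A := by
  rw [linkVertices, card_image_of_injOn (hA.injOn.mono fun a ha => by simpa using ha)]
  simp [mul_comm]

end LinkVertices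

/-- The set `S` first supplies the links, then turns what is left of the complement of `O` into a
Hamilton-connected graph. -/
theorem IsJoined.exists_links_and_hamiltonian_path [Fintype V] [DecidableEq V] (hJ : IsJoined G m)
    {O S : Finset V} (hOS : Disjoint O S) {x y : V} (hx : x ∈ S) (hy : y ∈ S) (hxy : x ≠ y)
    (p q : κ → V) (A : Finset κ) (hdeg : ∀ v, 2 * #A + 4 * m + 4 ≤ #(nbrsIn G S v)) :
    ∃ h H, IsLinkSystem G A p q S h ∧ IsPathBetween G Oᶜ x y H ∧
      H.toFinset = (O ∪ linkVertices A h)ᶜ := by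
  have hlink : ∀ v, 2 * #A * 1 + 2 * m ≤ #(nbrsIn G (S \ {x, y}) v) := fun v => by
    have hS := card_nbrsIn_le_card_sdiff_add (G := G) S {x, y} v
    have hpair := card_le_two (a := x) (b := y)
    have := hdeg v
    omega
  obtain ⟨h, hh, -⟩ := hJ.exists_linkSystem id (L := 1) (fun c => card_le_one.2 fun a ha b hb =>
    (mem_filter.1 ha).2.trans (mem_filter.1 hb).2.symm) p q A (fun c _ => hlink (p c))
    fun c _ => hlink (q c)
  have hnotlink : ∀ v ∈ ({x, y} : Finset V), v ∉ linkVertices A h := fun v hv hv' =>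
    (mem_sdiff.1 (hh.linkVertices_subset hv')).2 hv
  have hmem : ∀ v ∈ S, v ∉ linkVertices A h → v ∈ (O ∪ linkVertices A h)ᶜ := fun v hv hv' =>
    mem_compl.2 (notMem_union.2 ⟨disjoint_right.1 hOS hv, hv'⟩)
  obtain ⟨H, hH, hHU⟩ := hJ.exists_hamiltonian_path (U := (O ∪ linkVertices A h)ᶜ)
    (fun v _ => by
      have hS := card_nbrsIn_le_add (G := G) (U := S) (T := (O ∪ linkVertices A h)ᶜ)
        (W := linkVertices A h) (fun u hu => by
          by_cases huX : u ∈ linkVertices A h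
          exacts [mem_union_right _ huX, mem_union_left _ (hmem u hu huX)]) v
      have hX := (card_le_card (nbrsIn_subset (G := G) (linkVertices A h) v)).trans
        card_linkVertices_le
      have := hdeg v
      omega)
    (hmem x hx (hnotlink x (by simp))) (hmem y hy (hnotlink y (by simp))) hxy
  exact ⟨h, H, hh.mono sdiff_subset, hH.mono (compl_subset_compl.2 subset_union_left), hHU⟩

theorem IsJoined.exists_links_and_pieces [Fintype V] [DecidableEq V] (hJ : IsJoined G m)
    {O S : Finset V} (hOS : Disjoint O S) {x y : V} (hx : x ∈ S) (hy : y ∈ S) (hxy : x ≠ y)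
    (p q : κ → V) (A : Finset κ) (hdeg : ∀ v, 2 * #A + 4 * m + 4 ≤ #(nbrsIn G S v)) {k : ℕ}
    {d : Fin (k + 1) → ℕ} (hd : ∀ r, d r ≠ 0)
    (hsum : ∑ r, d r + 2 * #A + #O = Fintype.card V) :
    ∃ (h : κ × Bool → V) (P : Fin (k + 1) → List V) (hd tl : Fin (k + 1) → V),
      IsLinkSystem G A p q S h ∧ (∀ r, IsPathBetween G Oᶜ (hd r) (tl r) (P r)) ∧ hd 0 = x ∧
      tl (Fin.last k) = y ∧ (∀ r, (P r).length = d r) ∧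
      (∀ {r r' v}, v ∈ P r → v ∈ P r' → r = r') ∧
      ∀ v, (∃ r, v ∈ P r) ↔ v ∉ O ∪ linkVertices A h := by
  obtain ⟨h, H, hh, hH, hHU⟩ := hJ.exists_links_and_hamiltonian_path hOS hx hy hxy p q A hdeg
  have hlen : ∑ r, d r = H.length := by
    rw [← List.toFinset_card_of_nodup hH.nodup, hHU, card_compl, card_union_of_disjoint
      (hOS.mono_right hh.linkVertices_subset), hh.card_linkVertices]
    omega
  obtain ⟨P, hd', tl, rfl, hP, hPlen⟩ := hH.toIsPathIn.exists_pieces hd hlen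
  have hne : ∀ r, P r ≠ [] := fun r => List.ne_nil_of_mem (hP r).head_mem
  have hhead := hH.head?_eq
  have hlast := hH.getLast?_eq
  rw [head?_flatten_ofFn (hne 0), (hP 0).head?_eq] at hhead
  rw [getLast?_flatten_ofFn (hne _), (hP _).getLast?_eq] at hlast
  refine ⟨h, P, hd', tl, hh, hP, Option.some_inj.1 hhead, Option.some_inj.1 hlast, hPlen,
    eq_of_mem_of_nodup_flatten_ofFn hH.nodup, fun v => ?_⟩
  rw [← mem_flatten_ofFn, ← List.mem_toFinset, hHU, mem_compl]

section Bypassable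

variable {ι : Type*} {P : ι → List V}

theorem card_filter_setOf_mem_eq_le [DecidableEq (Set ι)] {Z : Finset V} {w : ℕ}
    (hlen : ∀ i, (P i).length ≤ w) (hZ : ∀ z ∈ Z, ∃ i, z ∈ P i) (c : Set ι) :
    #{z ∈ Z | {i | z ∈ P i} = c} ≤ w := by
  classical
  obtain hempty | ⟨z, hz⟩ := {z ∈ Z | {i | z ∈ P i} = c}.eq_empty_or_nonempty
  · simp [hempty]
  · obtain ⟨hzZ, rfl⟩ := mem_filter.1 hz
    obtain ⟨i, hi⟩ := hZ z hzZ
    refine (card_le_card (t := (P i).toFinset) fun u hu => ?_).trans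
      ((List.toFinset_card_le _).trans (hlen i))
    have hiu : i ∈ {i | u ∈ P i} := (mem_filter.1 hu).2 ▸ hi
    exact List.mem_toFinset.2 hiu

theorem card_biUnion_ends_le [Fintype ι] [DecidableEq V] (P : ι → List V) :
    #(univ.biUnion fun i => (P i).head?.toFinset ∪ (P i).getLast?.toFinset) ≤
      2 * Fintype.card ι := by
  rw [mul_comm]
  refine card_biUnion_le_card_mul _ _ _ fun i _ => (card_union_le _ _).trans ?_
  have hone : ∀ o : Option V, #o.toFinset ≤ 1 := fun o => by cases o <;> simp
  exact Nat.add_le_add (hone _) (hone _)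

/-- Colour each vertex by the set of pieces containing it and choose a rainbow link system. -/
theorem IsJoined.exists_bypassable_links [Fintype ι] (hJ : IsJoined G m)
    (hPeq : ∀ {i j v}, v ∈ P i → v ∈ P j → i = j) {w : ℕ} (hlen : ∀ i, (P i).length ≤ w)
    {Z : Finset V} (hZ : ∀ z ∈ Z, ∃ i, HasShortcut G (P i) z ∨ (P i).head? = some z ∨
      (P i).getLast? = some z) (p q : κ → V) (A : Finset κ)
    (hp : ∀ c ∈ A, 2 * #A * w + 2 * m + 2 * Fintype.card ι ≤ #(nbrsIn G Z (p c)))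
    (hq : ∀ c ∈ A, 2 * #A * w + 2 * m + 2 * Fintype.card ι ≤ #(nbrsIn G Z (q c))) :
    ∃ h, IsLinkSystem G A p q Z h ∧ (∀ a, a.1 ∈ A → ∃ i, HasShortcut G (P i) (h a)) ∧
      ∀ a b i, a.1 ∈ A → b.1 ∈ A → h a ∈ P i → h b ∈ P i → a = b := by
  classical
  let Z' : Finset V := {z ∈ Z | ∃ i, HasShortcut G (P i) z}
  let ends := univ.biUnion fun i => (P i).head?.toFinset ∪ (P i).getLast?.toFinset
  have hZ' : ∀ v, #(nbrsIn G Z v) ≤ #(nbrsIn G Z' v) + 2 * Fintype.card ι := fun v => by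
    refine (card_nbrsIn_le_add (T := Z') (W := ends) (fun z hz => ?_) v).trans
      (Nat.add_le_add_left ((card_le_card (nbrsIn_subset _ _)).trans (card_biUnion_ends_le P)) _)
    simp only [Z', ends, mem_union, mem_filter, mem_biUnion, mem_univ, true_and,
      Option.mem_toFinset, Option.mem_def]
    obtain ⟨i, hi | hi⟩ := hZ z hz
    exacts [Or.inl ⟨hz, i, hi⟩, Or.inr ⟨i, hi⟩]
  obtain ⟨h, hh, hinj⟩ := hJ.exists_linkSystem (fun v => {i | v ∈ P i}) (Z := Z')
    (card_filter_setOf_mem_eq_le hlen fun z hz => (mem_filter.1 hz).2.imp fun _ => (·.mem)) p q A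
    (fun c hc => by have := hp c hc; have := hZ' (p c); omega)
    (fun c hc => by have := hq c hc; have := hZ' (q c); omega)
  have hcol : ∀ {i v}, v ∈ P i → {j | v ∈ P j} = {i} := fun {i v} hi =>
    Set.ext fun j => ⟨fun hj => hPeq hj hi, fun hj => hj.symm ▸ hi⟩
  exact ⟨h, hh.mono (filter_subset _ _), fun a ha => (mem_filter.1 (hh.mem a ha)).2,
    fun a b i ha hb hia hib => hinj ha hb ((hcol hia).trans (hcol hib).symm)⟩

end Bypassable

end Stages

section MainLinkage

variable {V ι : Type*} {G : SimpleGraph V} {m : ℕ}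

theorem IsLinkSystem.congr {κ : Type*} {A : Finset κ} {p q p' q' : κ → V} {Y : Finset V}
    {h : κ × Bool → V} (hA : IsLinkSystem G A p q Y h) (hp : ∀ c ∈ A, p c = p' c)
    (hq : ∀ c ∈ A, q c = q' c) : IsLinkSystem G A p' q' Y h :=
  { hA with
    adj_left := fun c hc => hp c hc ▸ hA.adj_left c hc
    adj_right := fun c hc => hq c hc ▸ hA.adj_right c hc }

theorem HasShortcut.exists_piece {k : ℕ} {P : Fin k → List V} {z : V}
    (hz : HasShortcut G (List.ofFn P).flatten z) (hP : (List.ofFn P).flatten.Nodup) :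
    ∃ i, HasShortcut G (P i) z ∨ (P i).head? = some z ∨ (P i).getLast? = some z := by
  obtain ⟨i, hi⟩ := mem_flatten_ofFn.1 hz.mem
  refine ⟨i, or_iff_not_imp_right.2 fun hends => ?_⟩
  rw [not_or] at hends
  exact hz.of_isInfix hP (isInfix_flatten_ofFn i) hi hends.1 hends.2

theorem IsLinkSystem.exists_isLinkage_of_bypassable [Fintype ι] [DecidableEq ι] [Fintype V]
    [DecidableEq V] {s s' hd tl : ι → V} {A : Finset (ι × Bool)} {B : Finset V}
    {h h' : (ι × Bool) × Bool → V}
    (hA : IsLinkSystem G Aᶜ (linkStart s tl) (linkEnd hd s') Bᶜ h)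
    (hA' : IsLinkSystem G A (linkStart s tl) (linkEnd hd s') Bᶜ h') {P : ι → List V}
    (hP : ∀ r, IsPathBetween G Bᶜ (hd r) (tl r) (P r))
    (hPeq : ∀ {r r' v}, v ∈ P r → v ∈ P r' → r = r')
    (hmiss : ∀ a r, a.1 ∈ Aᶜ → h a ∉ P r)
    (hshort : ∀ a, a.1 ∈ A → ∃ r, HasShortcut G (P r) (h' a))
    (hone : ∀ a b r, a.1 ∈ A → b.1 ∈ A → h' a ∈ P r → h' b ∈ P r → a = b)
    (hcov : ∀ v ∉ B, (∃ r, v ∈ P r) ∨ ∃ a, a.1 ∈ Aᶜ ∧ h a = v) :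
    ∃ I, IsLinkage G B s s' I ∧
      ∀ r, (P r).length + 3 ≤ (I r).length ∧ (I r).length ≤ (P r).length + 4 := by
  have hsys := hA.ite hA' fun a b ha hb heq => by
    obtain ⟨r, hr⟩ := hshort b hb
    exact hmiss a r ha (heq ▸ hr.mem)
  rw [union_comm, union_compl, union_self] at hsys
  have hmemA : ∀ {a : (ι × Bool) × Bool} {r},
      (if a.1 ∈ Aᶜ then h a else h' a) ∈ P r → a.1 ∈ A := fun {a r} ha => by
    by_contra hnot
    rw [if_pos (mem_compl.2 hnot)] at ha
    exact hmiss a r (mem_compl.2 hnot) ha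
  have hval : ∀ {a : (ι × Bool) × Bool}, a.1 ∈ A → (if a.1 ∈ Aᶜ then h a else h' a) = h' a :=
    fun ha => if_neg fun hnot => mem_compl.1 hnot ha
  refine hsys.exists_isLinkage hP hPeq (fun a r ha => ?_) (fun a b r ha hb => ?_)
    fun v hv => (hcov v hv).imp_right fun ⟨a, ha, hav⟩ => ⟨a, by rw [if_pos ha, hav]⟩
  · have haA := hmemA ha
    rw [hval haA] at ha ⊢
    obtain ⟨r', hr'⟩ := hshort a haA
    rwa [hPeq ha hr'.mem]
  · have haA := hmemA ha
    have hbA := hmemA hb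
    rw [hval haA] at ha
    rw [hval hbA] at hb
    exact hone a b r haA hbA ha hb

theorem IsLinkSystem.exists_isLinkage_sum {ι' : Type*} [Fintype ι] [DecidableEq ι] [Fintype ι']
    [DecidableEq ι'] [Fintype V] [DecidableEq V] {s s' : ι ⊕ ι' → V} {hd tl : ι → V}
    {hd' tl' : ι' → V} {A : Finset ((ι ⊕ ι') × Bool)} {B O S : Finset V}
    {h h' : ((ι ⊕ ι') × Bool) × Bool → V} {P : ι → List V} {P' : ι' → List V}
    (hA : IsLinkSystem G Aᶜ (linkStart s (Sum.elim tl tl')) (linkEnd (Sum.elim hd hd') s') S h)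
    (hA' : IsLinkSystem G A (linkStart s (Sum.elim tl tl')) (linkEnd (Sum.elim hd hd') s') Bᶜ h')
    (hOS : Disjoint O S) (hO : ∀ v, v ∈ O ↔ v ∈ B ∨ ∃ i, v ∈ P i)
    (hP : ∀ i, IsPathBetween G Bᶜ (hd i) (tl i) (P i))
    (hP' : ∀ r, IsPathBetween G Oᶜ (hd' r) (tl' r) (P' r))
    (hPeq : ∀ {i j v}, v ∈ P i → v ∈ P j → i = j)
    (hP'eq : ∀ {r r' v}, v ∈ P' r → v ∈ P' r' → r = r')
    (hshort : ∀ a, a.1 ∈ A → ∃ i, HasShortcut G (P i) (h' a))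
    (hone : ∀ a b i, a.1 ∈ A → b.1 ∈ A → h' a ∈ P i → h' b ∈ P i → a = b)
    (hcov : ∀ v, (∃ r, v ∈ P' r) ↔ v ∉ O ∪ linkVertices Aᶜ h) :
    ∃ I, IsLinkage G B s s' I ∧ ∀ r, (Sum.elim P P' r).length + 3 ≤ (I r).length ∧
      (I r).length ≤ (Sum.elim P P' r).length + 4 := by
  have hBO : B ⊆ O := fun v hv => (hO v).2 (Or.inl hv)
  have hPO : ∀ {i v}, v ∈ P i → v ∈ O := fun hv => (hO _).2 (Or.inr ⟨_, hv⟩)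
  have hP'O : ∀ {r v}, v ∈ P' r → v ∉ O := fun {r v} hv => mem_compl.1 ((hP' r).subset v hv)
  have hon : ∀ {a}, a.1 ∈ A → h' a ∈ O := fun {a} ha => hPO (hshort a ha).choose_spec.mem
  refine hA.mono (subset_compl_iff_disjoint_left.2 (hOS.mono_left hBO))
    |>.exists_isLinkage_of_bypassable hA' (P := Sum.elim P P') ?_ ?_ ?_ ?_ ?_ ?_
  · exact Sum.rec hP fun r => (hP' r).mono (compl_subset_compl.2 hBO)
  · rintro (i | r) (j | r') v hv hv'
    exacts [congrArg _ (hPeq hv hv'), (hP'O hv' (hPO hv)).elim, (hP'O hv (hPO hv')).elim,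
      congrArg _ (hP'eq hv hv')]
  · rintro a (i | r) ha hv
    exacts [disjoint_right.1 hOS (hA.mem a ha) (hPO hv),
      (hcov _).1 ⟨r, hv⟩ (mem_union_right _ (mem_linkVertices.2 ⟨a, ha, rfl⟩))]
  · exact fun a ha => (hshort a ha).imp' Sum.inl fun _ => id
  · rintro a b (i | r) ha hb hva hvb
    exacts [hone a b i ha hb hva hvb, (hP'O hva (hon ha)).elim]
  · intro v hvB
    by_cases hv : v ∈ O ∪ linkVertices Aᶜ h
    · obtain hvO | hvX := mem_union.1 hv
      · obtain ⟨i, hi⟩ := ((hO v).1 hvO).resolve_left hvB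
        exact Or.inl ⟨Sum.inl i, hi⟩
      · exact Or.inr (mem_linkVertices.1 hvX)
    · obtain ⟨r, hr⟩ := (hcov v).2 hv
      exact Or.inl ⟨Sum.inr r, hr⟩

variable {K k : ℕ}

/-- The slots on the inside of a path cut into the pieces `inr 0, …, inr k`: the link leaving any
piece but the last and the link entering any piece but the first. -/
def innerSlots (K k : ℕ) : Finset ((Fin K ⊕ Fin (k + 1)) × Bool) :=
  univ.image fun c : Fin k × Bool => (Sum.inr (cond c.2 c.1.castSucc c.1.succ), c.2)

theorem card_innerSlots : #(innerSlots K k) = 2 * k := by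
  rw [innerSlots, card_image_of_injective, card_univ, Fintype.card_prod, Fintype.card_fin,
    Fintype.card_bool, mul_comm]
  rintro ⟨i, b⟩ ⟨j, b'⟩ hij
  obtain rfl : b = b' := congrArg Prod.snd hij
  cases b <;> simpa using hij

theorem card_compl_innerSlots : #(innerSlots K k)ᶜ = 2 * K + 2 := by
  rw [card_compl, card_innerSlots, Fintype.card_prod, Fintype.card_sum, Fintype.card_fin,
    Fintype.card_fin, Fintype.card_bool]
  omega

theorem eq_last_of_notMem_innerSlots {r : Fin (k + 1)} (hr : (Sum.inr r, true) ∉ innerSlots K k) :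
    r = Fin.last k := by
  by_contra hne
  obtain ⟨j, rfl⟩ := Fin.exists_castSucc_eq.2 hne
  exact hr (mem_image.2 ⟨(j, true), mem_univ _, rfl⟩)

theorem eq_zero_of_notMem_innerSlots {r : Fin (k + 1)} (hr : (Sum.inr r, false) ∉ innerSlots K k) :
    r = 0 := by
  by_contra hne
  obtain ⟨j, rfl⟩ := Fin.exists_succ_eq.2 hne
  exact hr (mem_image.2 ⟨(j, false), mem_univ _, rfl⟩)

variable [Fintype V] [DecidableEq V]

theorem IsJoined.exists_outer_links_and_pieces (hJ : IsJoined G m) {O S : Finset V}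
    (hOS : Disjoint O S) (s s' : Fin K ⊕ Fin (k + 1) → V) (hdL tlL : Fin K → V)
    (hS : ∀ v, 4 * K + 4 * m + 8 ≤ #(nbrsIn G S v)) {d : Fin (k + 1) → ℕ} (hd : ∀ r, d r ≠ 0)
    (hsum : ∑ r, d r + (4 * K + 4) + #O = Fintype.card V) :
    ∃ (h : (_ × Bool) × Bool → V) (P : Fin (k + 1) → List V) (hdH tlH : Fin (k + 1) → V),
      IsLinkSystem G (innerSlots K k)ᶜ (linkStart s (Sum.elim tlL tlH))
        (linkEnd (Sum.elim hdL hdH) s') S h ∧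
      (∀ r, IsPathBetween G Oᶜ (hdH r) (tlH r) (P r)) ∧ (∀ r, (P r).length = d r) ∧
      (∀ {r r' v}, v ∈ P r → v ∈ P r' → r = r') ∧
      ∀ v, (∃ r, v ∈ P r) ↔ v ∉ O ∪ linkVertices (innerSlots K k)ᶜ h := by
  have hA := card_compl_innerSlots (K := K) (k := k)
  obtain ⟨v⟩ : Nonempty V := Fintype.card_pos_iff.1 (by omega)
  obtain ⟨x, hx, y, hy, hxy⟩ : ∃ x ∈ S, ∃ y ∈ S, x ≠ y := one_lt_card.1 (by
    have := (hS v).trans (card_le_card (nbrsIn_subset S v))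
    omega)
  obtain ⟨h, P, hdH, tlH, hh, hP, hhd, htl, hPlen, hPeq, hPmem⟩ :=
    hJ.exists_links_and_pieces hOS hx hy hxy (linkStart s (Sum.elim tlL fun _ => y))
      (linkEnd (Sum.elim hdL fun _ => x) s') (innerSlots K k)ᶜ
      (fun v => by have := hS v; omega) hd (by omega)
  refine ⟨h, P, hdH, tlH, hh.congr ?_ ?_, hP, hPlen, hPeq, hPmem⟩
  · rintro ⟨i | r, _ | _⟩ hc <;> simp only [linkStart, cond_true, cond_false, Sum.elim_inl,
      Sum.elim_inr]
    rw [eq_last_of_notMem_innerSlots (mem_compl.1 hc), htl]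
  · rintro ⟨i | r, _ | _⟩ hc <;> simp only [linkEnd, cond_true, cond_false, Sum.elim_inl,
      Sum.elim_inr]
    rw [eq_zero_of_notMem_innerSlots (mem_compl.1 hc), hhd]

theorem IsJoined.exists_isLinkage_of_shortcuts (hJ : IsJoined G m) {B S Z : Finset V}
    (hBS : Disjoint B S) (s s' : Fin K ⊕ Fin (k + 1) → V) {d : Fin K ⊕ Fin (k + 1) → ℕ}
    (hd : ∀ r, d r ≠ 0) {w : ℕ} (hdw : ∀ r, d r ≤ w) {L : List V} (hL : IsPathIn G (B ∪ S)ᶜ L)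
    (hLlen : L.length = ∑ i, d (Sum.inl i))
    (hsum : ∑ r, d r + (4 * K + 4) + #B = Fintype.card V) (hshort : ∀ z ∈ Z, HasShortcut G L z)
    (hS : ∀ v, 4 * K + 4 * m + 8 ≤ #(nbrsIn G S v))
    (hZ : k ≠ 0 → ∀ v, 4 * k * w + 2 * m + 2 * K ≤ #(nbrsIn G Z v)) :
    ∃ I, IsLinkage G B s s' I ∧ ∀ r, d r + 3 ≤ (I r).length ∧ (I r).length ≤ d r + 4 := by
  obtain ⟨hLB, hLS⟩ : Disjoint L.toFinset B ∧ Disjoint L.toFinset S :=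
    disjoint_union_right.1 (disjoint_left.2 fun v hv =>
      mem_compl.1 (hL.subset v (List.mem_toFinset.1 hv)))
  obtain ⟨PL, hdL, tlL, rfl, hPL, hPLlen⟩ := hL.exists_pieces (fun i => hd (Sum.inl i)) hLlen.symm
  set L := (List.ofFn PL).flatten
  have hPLeq : ∀ {i j v}, v ∈ PL i → v ∈ PL j → i = j := eq_of_mem_of_nodup_flatten_ofFn hL.nodup
  have hOS : Disjoint (B ∪ L.toFinset) S := disjoint_union_left.2 ⟨hBS, hLS⟩
  obtain ⟨h, PH, hdH, tlH, hh, hPH, hPHlen, hPHeq, hPHmem⟩ :=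
    hJ.exists_outer_links_and_pieces hOS s s' hdL tlL hS (fun r => hd (Sum.inr r)) (by
      rw [card_union_of_disjoint hLB.symm, List.toFinset_card_of_nodup hL.nodup, hLlen, ← hsum,
        Fintype.sum_sum_type]
      omega)
  have hdegZ : ∀ c ∈ innerSlots K k, ∀ v,
      2 * #(innerSlots K k) * w + 2 * m + 2 * Fintype.card (Fin K) ≤ #(nbrsIn G Z v) :=
    fun c hc v => by
      have hcard := card_innerSlots (K := K) (k := k)
      have hpos := card_pos.2 ⟨c, hc⟩
      rw [hcard, Fintype.card_fin, ← mul_assoc 2 2]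
      exact hZ (by omega) v
  obtain ⟨h', hh', hh'short, hh'one⟩ := hJ.exists_bypassable_links hPLeq
    (fun i => (hPLlen i).trans_le (hdw _)) (fun z hz => (hshort z hz).exists_piece hL.nodup)
    (linkStart s (Sum.elim tlL tlH)) (linkEnd (Sum.elim hdL hdH) s') (innerSlots K k)
    (fun c hc => hdegZ c hc _) (fun c hc => hdegZ c hc _)
  have hZB : Z ⊆ Bᶜ := fun z hz =>
    mem_compl.2 (disjoint_left.1 hLB (List.mem_toFinset.2 (hshort z hz).mem))
  obtain ⟨I, hI, hIlen⟩ := hh.exists_isLinkage_sum (hh'.mono hZB) hOS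
    (by simp [L]) (fun i => (hPL i).mono (compl_subset_compl.2 subset_union_left)) hPH hPLeq hPHeq
    hh'short hh'one hPHmem
  refine ⟨I, hI, Sum.rec (fun i => ?_) fun r => ?_⟩
  · exact hPLlen i ▸ hIlen (Sum.inl i)
  · exact hPHlen r ▸ hIlen (Sum.inr r)

end MainLinkage

section BalancedLinkage

variable {V ι : Type*} {G : SimpleGraph V} {m : ℕ}

theorem exists_equitable_lengths (ι : Type*) [Fintype ι] [Nonempty ι] (D : ℕ) :
    ∃ d : ι → ℕ, (∀ r, D / Fintype.card ι ≤ d r ∧ d r ≤ D / Fintype.card ι + 1) ∧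
      ∑ r, d r = D := by
  let e := Fintype.equivFin ι
  refine ⟨fun r => D / Fintype.card ι + if (e r : ℕ) < D % Fintype.card ι then 1 else 0,
    fun r => by dsimp only; split_ifs <;> omega, ?_⟩
  have hmod := Nat.mod_lt D (Fintype.card_pos (α := ι))
  rw [sum_add_distrib, sum_const, card_univ, smul_eq_mul, e.sum_comp
    (fun i : Fin _ => if (i : ℕ) < D % Fintype.card ι then 1 else 0), sum_boole,
    Fin.card_filter_val_lt, min_eq_right hmod.le]
  exact Nat.div_add_mod D _

theorem card_mul_le_sum [Fintype ι] {d : ι → ℕ} {w : ℕ} (hd : ∀ r, w ≤ d r) :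
    Fintype.card ι * w ≤ ∑ r, d r :=
  card_nsmul_le_sum univ d w fun r _ => hd r

variable [Fintype V] [DecidableEq V]

theorem IsJoined.exists_isLinkage_of_lengths (hJ : IsJoined G m) {K k : ℕ} {B S Z : Finset V}
    (hBS : Disjoint B S) (hBSZ : Disjoint (B ∪ S) Z) (s s' : Fin K ⊕ Fin (k + 1) → V)
    {d : Fin K ⊕ Fin (k + 1) → ℕ} (hd : ∀ r, d r ≠ 0) {w : ℕ} (hdw : ∀ r, d r ≤ w)
    (hsum : ∑ r, d r + (4 * K + 4) + #B = Fintype.card V) (hKk : K = 0 → k = 0)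
    (hSd : #S ≤ ∑ r, d (Sum.inr r)) (hZd : K ≠ 0 → 5 * #Z + 1 ≤ ∑ i, d (Sum.inl i))
    (hdeg : ∀ v, 6 * #Z + 4 * m + 4 + #(B ∪ S) ≤ #(nbrsIn G univ v))
    (hS : ∀ v, 4 * K + 4 * m + 8 ≤ #(nbrsIn G S v))
    (hZ : ∀ v, 4 * k * w + 2 * m + 2 * K ≤ #(nbrsIn G Z v)) :
    ∃ I, IsLinkage G B s s' I ∧ ∀ r, d r + 3 ≤ (I r).length ∧ (I r).length ≤ d r + 4 := by
  obtain rfl | hK := eq_or_ne K 0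
  · exact hJ.exists_isLinkage_of_shortcuts (L := []) (Z := ∅) hBS s s' hd hdw
      ⟨List.nodup_nil, List.isChain_nil, by simp⟩ (by simp) hsum (by simp) hS
      fun hk => absurd (hKk rfl) hk
  · have hW : ∑ i, d (Sum.inl i) ≤ #(B ∪ S)ᶜ := by
      rw [card_compl, card_union_of_disjoint hBS, ← hsum, Fintype.sum_sum_type]
      omega
    obtain ⟨L, hL, hLlen, hLZ⟩ := hJ.exists_path_of_length_with_shortcuts
      (subset_compl_iff_disjoint_left.2 hBSZ) (fun v _ => by
        have := hdeg v
        have := card_nbrsIn_le_card_sdiff_add (G := G) univ (B ∪ S) v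
        rw [compl_eq_univ_sdiff]
        omega) (hZd hK) hW
    exact hJ.exists_isLinkage_of_shortcuts hBS s s' hd hdw hL hLlen hsum hLZ hS fun _ => hZ

/-- Among `N` pieces of average length about `D / N`, the `k + 1` pieces cut from the Hamilton path
through `S` must be few, as `Z` has to supply the links between them, but enough to absorb `S`. -/
theorem exists_piece_counts {n N q b σ ζ : ℕ} (hN : 0 < N) (hq : 4 ≤ q) (hb : 2 * b + 10 * N ≤ n)
    (hσ : σ * (2 * q) ≤ n) (hζ : 20 * ζ + 4 ≤ n) :
    ∃ K k D, K + (k + 1) = N ∧ D + (4 * K + 4) + b = n ∧ D / N ≠ 0 ∧ (K = 0 → k = 0) ∧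
      σ ≤ (k + 1) * (D / N) ∧ (K ≠ 0 → 5 * ζ + 1 ≤ K * (D / N)) ∧
      q * (4 * k * (D / N + 1)) ≤ 4 * (n + N) := by
  have hkq := Nat.div_mul_le_self N q
  have hNq := (Nat.lt_mul_div_succ N (by omega : 0 < q)).le
  have hk4 : N / q * 4 ≤ N := (Nat.mul_le_mul_left _ hq).trans hkq
  obtain ⟨k, hk⟩ : ∃ k, k = N / q := ⟨_, rfl⟩
  rw [← hk] at hkq hNq hk4
  obtain ⟨K, hK⟩ : ∃ K, K + (k + 1) = N := ⟨N - (k + 1), by omega⟩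
  obtain ⟨D, hD⟩ : ∃ D, D + (4 * K + 4 + b) = n := ⟨n - (4 * K + 4 + b), by omega⟩
  have hDlow := Nat.mul_div_le D N
  have hDup := (Nat.lt_mul_div_succ D hN).le
  refine ⟨K, k, D, hK, by omega, ?_⟩
  generalize D / N = w at hDlow hDup
  have hhalf : n ≤ 2 * (N * w) := by rw [mul_add] at hDup; omega
  refine ⟨by rintro rfl; omega, by omega, ?_, fun hK0 => ?_, ?_⟩
  · refine Nat.le_of_mul_le_mul_right (c := 2 * q) ?_ (by omega)
    calc σ * (2 * q) ≤ 2 * (N * w) := hσ.trans hhalf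
      _ ≤ 2 * (q * (k + 1) * w) := by gcongr
      _ = (k + 1) * w * (2 * q) := by ring
  · have hNK := Nat.mul_le_mul_right w (by omega : N ≤ 2 * K)
    rw [mul_assoc] at hNK
    omega
  · calc q * (4 * k * (w + 1)) = 4 * (k * q * (w + 1)) := by ring
      _ ≤ 4 * (N * (w + 1)) := by gcongr
      _ ≤ 4 * (n + N) := by rw [mul_add]; omega

theorem IsJoined.exists_balanced_isLinkage [Fintype ι] [Nonempty ι] (hJ : IsJoined G m) {q : ℕ}
    (hq : 4 ≤ q) {B S Z : Finset V} (hBS : Disjoint B S) (hBSZ : Disjoint (B ∪ S) Z)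
    (hB : 2 * #B + 10 * Fintype.card ι ≤ Fintype.card V) (hSn : #S * (2 * q) ≤ Fintype.card V)
    (hZn : 20 * #Z + 4 ≤ Fintype.card V)
    (hdeg : ∀ v, 6 * #Z + 4 * m + 4 + #(B ∪ S) ≤ #(nbrsIn G univ v))
    (hS : ∀ v, 4 * Fintype.card ι + 4 * m + 4 ≤ #(nbrsIn G S v))
    (hZ : ∀ v, 4 * (Fintype.card V + Fintype.card ι) + q * (2 * m + 2 * Fintype.card ι) ≤
      q * #(nbrsIn G Z v)) (s s' : ι → V) :
    ∃ I ℓ, IsLinkage G B s s' I ∧ ∀ r, ℓ ≤ (I r).length + 1 ∧ (I r).length ≤ ℓ + 1 := by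
  obtain ⟨K, k, D, hKk, hD, hw, hKk0, hSw, hZw, hqw⟩ :=
    exists_piece_counts (Fintype.card_pos (α := ι)) hq hB hSn hZn
  have e : ι ≃ Fin K ⊕ Fin (k + 1) := Fintype.equivOfCardEq (by simpa using hKk.symm)
  obtain ⟨d, hd, hdsum⟩ := exists_equitable_lengths (Fin K ⊕ Fin (k + 1)) D
  rw [← Fintype.card_congr e] at hd
  set w := D / Fintype.card ι
  have hinl : K * w ≤ ∑ i, d (Sum.inl i) := by
    simpa using card_mul_le_sum fun i => (hd (Sum.inl i)).1
  have hinr : (k + 1) * w ≤ ∑ r, d (Sum.inr r) := by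
    simpa using card_mul_le_sum fun r => (hd (Sum.inr r)).1
  have hZdeg : ∀ v, 4 * k * (w + 1) + 2 * m + 2 * K ≤ #(nbrsIn G Z v) := fun v => by
    refine Nat.le_of_mul_le_mul_left (c := q) (le_trans ?_ (hZ v)) (by omega)
    rw [add_assoc, mul_add q]
    exact Nat.add_le_add hqw (Nat.mul_le_mul_left q (by omega))
  obtain ⟨I, hI, hIlen⟩ := hJ.exists_isLinkage_of_lengths hBS hBSZ (s ∘ e.symm) (s' ∘ e.symm)
    (fun r => ((Nat.pos_of_ne_zero hw).trans_le (hd r).1).ne') (fun r => (hd r).2) (by omega) hKk0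
    (hSw.trans hinr)
    (fun hK => (hZw hK).trans hinl) hdeg (fun v => by have := hS v; omega) hZdeg
  refine ⟨I ∘ e, w + 4, by simpa [Function.comp_assoc] using hI.comp_equiv e, fun r => ?_⟩
  have := hd (e r)
  have := hIlen (e r)
  simp only [Function.comp_apply]
  omega

end BalancedLinkage

section Quantitative

variable {V : Type*} {G : SimpleGraph V} {m : ℕ}

theorem mul_lt_two_pow_of_le {R x n : ℕ} (hx : 2 ^ 20 * R ^ 3 * (2 ^ 12 * R ^ 2) ≤ x)
    (hn : n ≤ 2 ^ 20 * R ^ 3 * (x + 1)) : n * (2 ^ 12 * R ^ 2) < 2 ^ (2 * x) :=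
  calc n * (2 ^ 12 * R ^ 2) ≤ 2 ^ 20 * R ^ 3 * (x + 1) * (2 ^ 12 * R ^ 2) := by gcongr
    _ = 2 ^ 20 * R ^ 3 * (2 ^ 12 * R ^ 2) * (x + 1) := by ring
    _ ≤ x * (x + 1) := by gcongr
    _ < (x + 1) * (x + 1) := by gcongr; omega
    _ ≤ 2 ^ x * 2 ^ x := by gcongr <;> exact Nat.lt_two_pow_self
    _ = 2 ^ (2 * x) := by ring

variable [Fintype V] [DecidableRel G.Adj]

theorem exists_disjoint_reservoirs [DecidableEq V] {R x : ℕ} (hR : 0 < R)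
    (hpow : Fintype.card V * (2 ^ 12 * R ^ 2) < 2 ^ (2 * x))
    (hdegR : ∀ v, Fintype.card V ≤ R * G.degree v) (hdeg : ∀ v, 2 ^ 20 * R ^ 2 * x ≤ G.degree v)
    {B : Finset V} (hB : #B ≤ x) :
    ∃ S Z, Disjoint B S ∧ Disjoint (B ∪ S) Z ∧ #S * (2 ^ 12 * R ^ 2) ≤ Fintype.card V ∧
      #Z * (32 * R) ≤ Fintype.card V ∧ (∀ v, 32 * x ≤ #(nbrsIn G S v)) ∧
      ∀ v, 2 ^ 12 * R * x ≤ #(nbrsIn G Z v) := by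
  have hRx : x ≤ R * x := Nat.le_mul_of_pos_left x hR
  have hR2x : R * x ≤ R ^ 2 * x := Nat.mul_le_mul_right x (Nat.le_self_pow two_ne_zero R)
  obtain ⟨Z, hZB, hZ, hZdeg⟩ := exists_reservoir (G := G) (q := 32 * R) (x := 2 ^ 12 * R * x)
    (by omega) B (fun v => by linarith [hdeg v]) (by
      calc Fintype.card V * (32 * R) ≤ Fintype.card V * (2 ^ 12 * R ^ 2) := by
            gcongr
            exacts [by norm_num, Nat.le_self_pow two_ne_zero R]
        _ < 2 ^ (2 * x) := hpow
        _ ≤ 2 ^ (2 ^ 12 * R * x) := Nat.pow_le_pow_right two_pos (by linarith))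
  have hZ32 : ∀ v, 32 * #Z ≤ G.degree v := fun v =>
    Nat.le_of_mul_le_mul_left (by linarith [hdegR v] : R * (32 * #Z) ≤ R * G.degree v) hR
  obtain ⟨S, hSBZ, hS, hSdeg⟩ := exists_reservoir (G := G) (q := 2 ^ 12 * R ^ 2) (x := 32 * x)
    (by positivity) (B ∪ Z)
    (fun v => by linarith [hdeg v, hZ32 v, card_union_le B Z])
    (hpow.trans_le (Nat.pow_le_pow_right two_pos (by omega)))
  rw [disjoint_union_right] at hSBZ
  exact ⟨S, Z, hSBZ.1.symm, disjoint_union_left.2 ⟨hZB.symm, hSBZ.2⟩, hS, hZ, hSdeg, hZdeg⟩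

theorem IsJoined.exists_balanced_isLinkage_of_degree {ι : Type*} [Fintype ι] [Nonempty ι]
    (hJ : IsJoined G m) {R x : ℕ} (hR : 0 < R) (hx : 2 ^ 20 * R ^ 3 * (2 ^ 12 * R ^ 2) ≤ x)
    (hnl : 2 ^ 20 * R ^ 3 * x ≤ Fintype.card V)
    (hnu : Fintype.card V ≤ 2 ^ 20 * R ^ 3 * (x + 1)) (hm : m ≤ x)
    (hdeg : ∀ v, Fintype.card V ≤ R * G.degree v) {B : Finset V} (hB : #B ≤ x)
    (hι : Fintype.card ι ≤ x) (s s' : ι → V) :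
    ∃ I ℓ, IsLinkage G B s s' I ∧ ∀ r, ℓ ≤ (I r).length + 1 ∧ (I r).length ≤ ℓ + 1 := by
  classical
  have hRR2 : R ≤ R ^ 2 := Nat.le_self_pow two_ne_zero R
  have hR3 : 1 ≤ R ^ 3 := Nat.one_le_pow _ _ hR
  have hx12 : 2 ^ 12 ≤ x := by nlinarith
  have hxn : 2 ^ 20 * x ≤ Fintype.card V := by nlinarith
  have hdegx : ∀ v, 2 ^ 20 * R ^ 2 * x ≤ G.degree v := fun v => by
    refine Nat.le_of_mul_le_mul_left (c := R) ?_ hR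
    linarith [hdeg v]
  obtain ⟨S, Z, hBS, hBSZ, hS, hZ, hSdeg, hZdeg⟩ :=
    exists_disjoint_reservoirs hR (mul_lt_two_pow_of_le hx hnu) hdeg hdegx hB
  have hZ32 : ∀ v, 32 * #Z ≤ G.degree v := fun v =>
    Nat.le_of_mul_le_mul_left (by linarith [hdeg v] : R * (32 * #Z) ≤ R * G.degree v) hR
  have hS32 : ∀ v, 32 * #S ≤ G.degree v := fun v => by
    refine Nat.le_of_mul_le_mul_left (c := R) ?_ hR
    nlinarith [hdeg v]
  refine hJ.exists_balanced_isLinkage (q := 2 ^ 11 * R ^ 2) (by nlinarith) hBS hBSZ (by omega)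
    (by linarith) (by nlinarith) (fun v => ?_) (fun v => ?_) (fun v => ?_) s s'
  · rw [card_nbrsIn_univ]
    nlinarith [hZ32 v, hS32 v, hdegx v, card_union_le B S]
  · linarith [hSdeg v]
  · refine le_trans ?_ (Nat.mul_le_mul_left _ (hZdeg v))
    nlinarith

theorem IsJoined.hasSpanningNearlyBalancedKSubdivision (hJ : IsJoined G m) {R x t : ℕ}
    (hR : 0 < R) (hx : 2 ^ 20 * R ^ 3 * (2 ^ 12 * R ^ 2) ≤ x)
    (hnl : 2 ^ 20 * R ^ 3 * x ≤ Fintype.card V)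
    (hnu : Fintype.card V ≤ 2 ^ 20 * R ^ 3 * (x + 1)) (hm : m ≤ x)
    (hdeg : ∀ v, Fintype.card V ≤ R * G.degree v) (ht : 2 ≤ t) (htx : t * t ≤ x) :
    HasSpanningNearlyBalancedKSubdivision G t := by
  have htx' : t ≤ x := (Nat.le_mul_self t).trans htx
  have hxn : x ≤ Fintype.card V := (Nat.le_mul_of_pos_left x (by positivity)).trans hnl
  obtain ⟨b⟩ : Nonempty (Fin t ↪ V) :=
    Function.Embedding.nonempty_of_card_le (by simpa using htx'.trans hxn)
  have : Nonempty {p : Fin t × Fin t // p.1 < p.2} :=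
    ⟨⟨(⟨0, by omega⟩, ⟨1, by omega⟩), Nat.zero_lt_one⟩⟩
  obtain ⟨I, ℓ, hI, hlen⟩ := hJ.exists_balanced_isLinkage_of_degree hR hx hnl hnu hm hdeg
    (ι := {p : Fin t × Fin t // p.1 < p.2}) (B := univ.map b) (by simpa using htx')
    ((Fintype.card_subtype_le _).trans (by simpa using htx)) (fun p => b p.1.1) (fun p => b p.1.2)
  exact hI.hasSpanningNearlyBalancedKSubdivision ht b hlen

end Quantitative

section Rounding

variable {C n : ℕ}

theorem ceil_le_div_of_le (hC : 0 < C) (hn : C ≤ n) : ⌈1 / (2 * C : ℝ) * n⌉₊ ≤ n / C := by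
  rw [Nat.ceil_le, one_div_mul_eq_div, div_le_iff₀ (by positivity)]
  have hlt := Nat.lt_mul_div_succ n hC
  have hle : C * 1 ≤ C * (n / C) := Nat.mul_le_mul_left C (Nat.div_pos hn hC)
  exact_mod_cast (by linarith : n ≤ n / C * (2 * C))

theorem mul_self_le_div_of_le_sqrt {t : ℕ} (hC : 0 < C) (ht : (t : ℝ) ≤ 1 / C * √n) :
    t * t ≤ n / C := by
  rw [one_div_mul_eq_div, le_div_iff₀ (by positivity)] at ht
  rw [Nat.le_div_iff_mul_le hC]
  calc t * t * C ≤ (t * C) ^ 2 := by nlinarith [Nat.le_mul_self C]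
    _ ≤ n := by exact_mod_cast (Real.le_sqrt (by positivity) n.cast_nonneg).1 ht

theorem le_mul_of_one_div_le {μ : ℝ} (hμ : 0 < μ) {R a : ℕ} (hR : 1 / μ ≤ R) (ha : μ * n ≤ a) :
    n ≤ R * a := by
  have hRμ : 1 ≤ R * μ := (div_le_iff₀ hμ).1 hR
  have : (n : ℝ) ≤ R * a :=
    calc (n : ℝ) ≤ R * μ * n := le_mul_of_one_le_left n.cast_nonneg hRμ
      _ = R * (μ * n) := mul_assoc _ _ _
      _ ≤ R * a := by gcongr
  exact_mod_cast this

end Rounding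

/-- Theorem 1.4: for every `μ > 0`, there are constants `c, ε ∈ (0,1]` and `n₀`
such that every `n`-vertex `⌈εn⌉`-joined graph with minimum degree at least `μn`
(for `n ≥ n₀`) contains a spanning nearly-balanced subdivision of `K_t`
for all `2 ≤ t ≤ c√n`. -/
theorem spanning_subdivision_no_bipartite_holes (μ : ℝ) (hμ : 0 < μ) :
    ∃ c ε : ℝ, 0 < c ∧ c ≤ 1 ∧ 0 < ε ∧ ε ≤ 1 ∧ ∃ n₀ : ℕ,
      ∀ n : ℕ, n₀ ≤ n →
        ∀ (V : Type) [Fintype V] [DecidableEq V] (G : SimpleGraph V) [DecidableRel G.Adj],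
          Fintype.card V = n →
          IsJoined G ⌈ε * n⌉₊ →
          (∀ v : V, μ * n ≤ (G.degree v : ℝ)) →
          ∀ t : ℕ, 2 ≤ t → (t : ℝ) ≤ c * Real.sqrt n →
            HasSpanningNearlyBalancedKSubdivision G t := by
  obtain ⟨R, hRμ⟩ := exists_nat_ge (1 / μ)
  have hR : 0 < R := Nat.cast_pos.1 ((one_div_pos.2 hμ).trans_le hRμ)
  obtain ⟨C, hC⟩ : ∃ C, C = 2 ^ 20 * R ^ 3 := ⟨_, rfl⟩
  have hC0 : 0 < C := hC ▸ by positivity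
  have hC1 : (1 : ℝ) ≤ C := Nat.one_le_cast.2 hC0
  refine ⟨1 / C, 1 / (2 * C), by positivity, div_le_one_of_le₀ hC1 (by positivity), by positivity,
    div_le_one_of_le₀ (by linarith) (by positivity), C * (C * (2 ^ 12 * R ^ 2)), ?_⟩
  rintro n hn V _ _ G _ rfl hJ hdeg t ht htn
  have hCn : C ≤ Fintype.card V := (Nat.le_mul_of_pos_right C (by positivity)).trans hn
  have hx : C * (2 ^ 12 * R ^ 2) ≤ Fintype.card V / C := by
    rwa [Nat.le_div_iff_mul_le hC0, mul_comm]
  exact hJ.hasSpanningNearlyBalancedKSubdivision hR (hC ▸ hx) (hC ▸ Nat.mul_div_le _ _)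
    (hC ▸ (Nat.lt_mul_div_succ _ hC0).le) (ceil_le_div_of_le hC0 hCn)
    (fun v => le_mul_of_one_div_le hμ hRμ (hdeg v)) ht (mul_self_le_div_of_le_sqrt hC0 htn)
end

section
/- There exists ε₀ ∈ (0,1) such that for every ε ∈ (0, ε₀] there exists C > 0 such that the following holds. Let n ≥ 3 and d ∈ ℕ and λ > 0 satisfy d/λ ≥ C·(log n)^3. Suppose G is an (n,d,λ)-graph containing disjoint subsets A, B ⊆ V(G) with |A| = |B| such that every vertex of A has at least ε·d/(2(log n)^3) neighbours in B and every vertex of B has at least ε·d/(2(log n)^3) neighbours in A. Then the bipartite graph G[A,B] (with parts A and B and the edges of G between them) contains a perfect matching. -/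
open SimpleGraph

/-- `G` is an `(n,d,λ)`-graph: `n` vertices, `d`-regular, and all adjacency-matrix
eigenvalues except the largest one `d` are at most `λ` in absolute value. -/
def IsNDLGraph (n d : ℕ) (lam : ℝ) {V : Type*} [Fintype V] [DecidableEq V]
    (G : SimpleGraph V) [DecidableRel G.Adj] : Prop :=
  Fintype.card V = n ∧ G.IsRegularOfDegree d ∧
    ∀ hA : (G.adjMatrix ℝ).IsHermitian,
      ∃ i₀ : V, hA.eigenvalues i₀ = (d : ℝ) ∧
        ∀ i : V, i ≠ i₀ → |hA.eigenvalues i| ≤ lam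

/-!
The adjacency operator of an `(n,d,λ)`-graph has norm at most `λ` on vectors of mean zero, which
gives the expander mixing lemma `|e(S,T) - d|S||T|/n| ≤ λ √(|S||T|)`. If `G[A,B]` has no perfect
matching, Hall's theorem provides `S ⊆ A` and `T ⊆ B` with `|T| < |S|` and no edges between `S` and
`B \ T`; then also `|A \ S| < |B \ T|`, and all neighbours of `B \ T` in `A` lie in `A \ S`. Once
the minimum degree of `G[A,B]` is at least `2λ`, the mixing lemma applied to `(S, T)` and to
`(B \ T, A \ S)` shows that `S` and `B \ T` both have more than `λn/d` vertices, and applied to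
`(S, B \ T)` that they must span an edge, a contradiction.
-/

open Finset

section InnerProduct

variable {ι 𝕜 E : Type*} [Fintype ι] [RCLike 𝕜] [NormedAddCommGroup E] [InnerProductSpace 𝕜 E]
  {T : E →ₗ[𝕜] E} {b : OrthonormalBasis ι 𝕜 E} {μ : ι → 𝕜}

lemma inner_apply_of_eigenbasis (hb : ∀ i, T (b i) = μ i • b i) (i : ι) (x : E) :
    inner 𝕜 (b i) (T x) = μ i * inner 𝕜 (b i) x := by
  classical
  conv_lhs => rw [← b.sum_repr' x]
  simp [hb, inner_sum, inner_smul_right, b.inner_eq_ite, mul_comm]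

lemma norm_apply_le_of_eigenbasis (hb : ∀ i, T (b i) = μ i • b i) {r : ℝ} (hr : 0 ≤ r) {x : E}
    (hμ : ∀ i, inner 𝕜 (b i) x ≠ 0 → ‖μ i‖ ≤ r) : ‖T x‖ ≤ r * ‖x‖ := by
  have hcoord (i : ι) : ‖inner 𝕜 (b i) (T x)‖ ≤ r * ‖inner 𝕜 (b i) x‖ := by
    rw [inner_apply_of_eigenbasis hb, norm_mul]
    rcases eq_or_ne (inner 𝕜 (b i) x) 0 with h0 | h0
    · simp [h0]
    · gcongr
      exact hμ i h0
  refine le_of_sq_le_sq ?_ (by positivity)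
  calc ‖T x‖ ^ 2 = ∑ i, ‖inner 𝕜 (b i) (T x)‖ ^ 2 := (b.sum_sq_norm_inner_right _).symm
    _ ≤ ∑ i, (r * ‖inner 𝕜 (b i) x‖) ^ 2 := by gcongr with i; exact hcoord i
    _ = (r * ‖x‖) ^ 2 := by
      simp_rw [mul_pow, ← mul_sum, b.sum_sq_norm_inner_right]

lemma inner_eq_zero_of_eigenbasis_of_ne (hb : ∀ i, T (b i) = μ i • b i) {u : E} {i₀ : ι}
    (hu : u ≠ 0) (hTu : T u = μ i₀ • u) (hne : ∀ i ≠ i₀, μ i ≠ μ i₀) {x : E}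
    (hx : inner 𝕜 u x = 0) : inner 𝕜 (b i₀) x = 0 := by
  have horth (i : ι) (hi : i ≠ i₀) : inner 𝕜 (b i) u = 0 := by
    have h := inner_apply_of_eigenbasis hb i u
    rw [hTu, inner_smul_right, mul_eq_mul_right_iff] at h
    exact h.resolve_left (hne i hi).symm
  have hu_eq : u = inner 𝕜 (b i₀) u • b i₀ := by
    conv_lhs => rw [← b.sum_repr' u]
    exact sum_eq_single i₀ (fun i _ hi => by rw [horth i hi, zero_smul]) (by simp)
  have hcoord : inner 𝕜 (b i₀) u ≠ 0 := fun h => hu (by rw [hu_eq, h, zero_smul])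
  rw [hu_eq, inner_smul_left, mul_eq_zero, map_eq_zero] at hx
  exact hx.resolve_left hcoord

/- If `‖μ i₀‖ > r`, then `μ i₀` is a simple eigenvalue, so `u` spans its eigenspace and `x` has no
component there; otherwise the bound `r` holds for all eigenvalues. -/
lemma norm_apply_le_of_inner_eigenvector_eq_zero (hb : ∀ i, T (b i) = μ i • b i) {r : ℝ}
    (hr : 0 ≤ r) {u : E} {i₀ : ι} (hu : u ≠ 0) (hTu : T u = μ i₀ • u)
    (hμ : ∀ i ≠ i₀, ‖μ i‖ ≤ r) {x : E} (hx : inner 𝕜 u x = 0) : ‖T x‖ ≤ r * ‖x‖ := by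
  refine norm_apply_le_of_eigenbasis hb hr fun i hi => ?_
  by_contra! hlt
  have hii₀ : i = i₀ := by_contra fun h => (hμ i h).not_gt hlt
  subst hii₀
  refine hi (inner_eq_zero_of_eigenbasis_of_ne hb hu hTu (fun j hj h => ?_) hx)
  exact (hμ j hj).not_gt (h ▸ hlt)

lemma norm_sub_smul_le_of_inner_eq_zero {u y : E} {c : 𝕜} (h : inner 𝕜 u (y - c • u) = 0) :
    ‖y - c • u‖ ≤ ‖y‖ := by
  have hpyth := norm_add_sq_eq_norm_sq_add_norm_sq_of_inner_eq_zero (c • u) (y - c • u)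
    (by rw [inner_smul_left, h, mul_zero])
  rw [add_sub_cancel] at hpyth
  nlinarith [norm_nonneg y, norm_nonneg (y - c • u), sq_nonneg ‖c • u‖]

end InnerProduct

section IndicatorVec

variable {V : Type*} [Fintype V] [DecidableEq V]

/-- The indicator vector `1_S` of a vertex set `S`, as an element of Euclidean space, so that norms
are `ℓ²` norms. -/
def indicatorVec (S : Finset V) : EuclideanSpace ℝ V :=
  WithLp.toLp 2 fun v => if v ∈ S then 1 else 0

lemma inner_indicatorVec_left (S : Finset V) (x : EuclideanSpace ℝ V) :
    inner ℝ (indicatorVec S) x = ∑ v ∈ S, x v := by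
  simp [indicatorVec, PiLp.inner_apply]

lemma inner_indicatorVec_indicatorVec (S T : Finset V) :
    inner ℝ (indicatorVec S) (indicatorVec T) = #(S ∩ T) := by
  rw [inner_indicatorVec_left]
  simp [indicatorVec]

lemma norm_indicatorVec (S : Finset V) : ‖indicatorVec S‖ = √(#S : ℝ) := by
  rw [norm_eq_sqrt_real_inner, inner_indicatorVec_indicatorVec, inter_self]

variable (G : SimpleGraph V) [DecidableRel G.Adj]

lemma card_interedges_eq_sum_card_neighborFinset_inter (S T : Finset V) :
    #(G.interedges S T) = ∑ v ∈ S, #(G.neighborFinset v ∩ T) := by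
  rw [SimpleGraph.interedges, Rel.interedges, card_filter, sum_product]
  refine sum_congr rfl fun v _ => ?_
  rw [← card_filter]
  congr 1
  ext w
  simp [and_comm]

lemma inner_indicatorVec_toEuclideanLin_adjMatrix (S T : Finset V) :
    inner ℝ (indicatorVec S) ((G.adjMatrix ℝ).toEuclideanLin (indicatorVec T)) =
      #(G.interedges S T) := by
  rw [inner_indicatorVec_left, card_interedges_eq_sum_card_neighborFinset_inter]
  simp [indicatorVec, SimpleGraph.adjMatrix_mulVec_apply, inter_comm]

variable {G}

lemma toEuclideanLin_adjMatrix_indicatorVec_univ {d : ℕ} (hG : G.IsRegularOfDegree d) :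
    (G.adjMatrix ℝ).toEuclideanLin (indicatorVec univ) = (d : ℝ) • indicatorVec univ := by
  ext v
  simp [indicatorVec, SimpleGraph.adjMatrix_mulVec_apply, hG.degree_eq v]

end IndicatorVec

lemma exists_bijective_rel_of_forall_card_le {α β : Type*} {r : α → β → Prop} {A : Finset α}
    {B : Finset β} (hAB : #A = #B)
    (hr : ∀ S ⊆ A, ∀ T ⊆ B, (∀ a ∈ S, ∀ b ∈ B, r a b → b ∈ T) → #S ≤ #T) :
    ∃ f : {x // x ∈ A} → {x // x ∈ B}, Function.Bijective f ∧ ∀ a, r a.1 (f a).1 := by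
  classical
  obtain ⟨f, hf, hfr⟩ := (all_card_le_biUnion_card_iff_exists_injective
    fun a : {x // x ∈ A} => {b ∈ B | r a.1 b}).mp fun S => by
      rw [← card_map (Function.Embedding.subtype (· ∈ A))]
      refine hr _ (map_subtype_subset S) _ (biUnion_subset.mpr fun a _ => filter_subset _ _) ?_
      simp only [mem_map, mem_biUnion, mem_filter]
      rintro _ ⟨a, ha, rfl⟩ b hb hab
      exact ⟨a, ha, hb, hab⟩
  simp only [mem_filter] at hfr
  refine ⟨fun a => ⟨f a, (hfr a).1⟩, ?_, fun a => (hfr a).2⟩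
  rw [Fintype.bijective_iff_injective_and_card]
  exact ⟨fun a a' h => hf (congrArg Subtype.val h), by simpa using hAB⟩

namespace IsNDLGraph

variable {n d : ℕ} {lam δ : ℝ} {V : Type*} [Fintype V] [DecidableEq V] {G : SimpleGraph V}
  [DecidableRel G.Adj]

lemma order_pos (hG : IsNDLGraph n d lam G) : 0 < n := by
  obtain ⟨rfl, -, hspec⟩ := hG
  obtain ⟨i₀, -⟩ := hspec (isHermitian_adjMatrix ℝ G)
  exact Fintype.card_pos_iff.mpr ⟨i₀⟩

lemma norm_toEuclideanLin_adjMatrix_le (hG : IsNDLGraph n d lam G) (hlam : 0 ≤ lam)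
    {x : EuclideanSpace ℝ V} (hx : inner ℝ (indicatorVec univ) x = 0) :
    ‖(G.adjMatrix ℝ).toEuclideanLin x‖ ≤ lam * ‖x‖ := by
  have hn := hG.order_pos
  obtain ⟨rfl, hreg, hspec⟩ := hG
  have hA : (G.adjMatrix ℝ).IsHermitian := isHermitian_adjMatrix ℝ G
  obtain ⟨i₀, hi₀, hle⟩ := hspec hA
  have heigen (i : V) : (G.adjMatrix ℝ).toEuclideanLin (hA.eigenvectorBasis i) =
      hA.eigenvalues i • hA.eigenvectorBasis i :=
    WithLp.ofLp_injective 2 (hA.mulVec_eigenvectorBasis i)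
  have hone : (indicatorVec univ : EuclideanSpace ℝ V) ≠ 0 := by
    rw [← norm_pos_iff, norm_indicatorVec, card_univ]
    positivity
  refine norm_apply_le_of_inner_eigenvector_eq_zero heigen hlam hone ?_ hle hx
  rw [hi₀, toEuclideanLin_adjMatrix_indicatorVec_univ hreg]

theorem expander_mixing (hG : IsNDLGraph n d lam G) (hlam : 0 ≤ lam) (S T : Finset V) :
    |(#(G.interedges S T) : ℝ) - d * (#S * #T) / n| ≤ lam * √(#S * #T) := by
  have hn : (n : ℝ) ≠ 0 := by exact_mod_cast hG.order_pos.ne'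
  set u : EuclideanSpace ℝ V := indicatorVec univ with hu
  set x := indicatorVec T - (#T / n : ℝ) • u with hx
  have hux : inner ℝ u x = 0 := by
    rw [hx, hu, inner_sub_right, inner_smul_right, inner_indicatorVec_indicatorVec,
      inner_indicatorVec_indicatorVec, univ_inter, univ_inter, card_univ, hG.1,
      div_mul_cancel₀ _ hn, sub_self]
  have hnorm : ‖x‖ ≤ √(#T : ℝ) := by
    rw [← norm_indicatorVec]
    exact norm_sub_smul_le_of_inner_eq_zero hux
  have hdev : inner ℝ (indicatorVec S) ((G.adjMatrix ℝ).toEuclideanLin x) =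
      #(G.interedges S T) - d * (#S * #T) / n := by
    rw [hx, map_sub, map_smul, hu, toEuclideanLin_adjMatrix_indicatorVec_univ hG.2.1,
      inner_sub_right, inner_indicatorVec_toEuclideanLin_adjMatrix, inner_smul_right,
      inner_smul_right, inner_indicatorVec_indicatorVec, inter_univ]
    ring
  calc |(#(G.interedges S T) : ℝ) - d * (#S * #T) / n|
      ≤ ‖indicatorVec S‖ * ‖(G.adjMatrix ℝ).toEuclideanLin x‖ := by
        rw [← hdev]
        exact abs_real_inner_le_norm _ _
    _ ≤ √(#S : ℝ) * (lam * √(#T : ℝ)) := by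
        rw [norm_indicatorVec]
        gcongr
        exact (hG.norm_toEuclideanLin_adjMatrix_le hlam hux).trans (by gcongr)
    _ = lam * √(#S * #T) := by
        rw [Real.sqrt_mul (Nat.cast_nonneg _)]
        ring

lemma le_of_forall_le_card_neighborFinset_inter (hG : IsNDLGraph n d lam G) (hlam : 0 ≤ lam)
    {S T : Finset V} (hS : S.Nonempty) (hTS : #T ≤ #S)
    (hδ : ∀ a ∈ S, δ ≤ #(G.neighborFinset a ∩ T)) : δ ≤ d * #T / n + lam := by
  have hmix := (abs_le.mp (hG.expander_mixing hlam S T)).2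
  have hsum : #S * δ ≤ #(G.interedges S T) := by
    rw [card_interedges_eq_sum_card_neighborFinset_inter, Nat.cast_sum]
    simpa using card_nsmul_le_sum S _ δ hδ
  have hsqrt : √(#S * #T : ℝ) ≤ #S := by
    rw [Real.sqrt_le_left (Nat.cast_nonneg _), sq]
    gcongr
  refine le_of_mul_le_mul_left ?_ (Nat.cast_pos.mpr hS.card_pos : (0 : ℝ) < #S)
  calc #S * δ ≤ d * (#S * #T) / n + lam * √(#S * #T) := by linarith
    _ ≤ d * (#S * #T) / n + lam * #S := by gcongr
    _ = #S * (d * #T / n + lam) := by ring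

lemma mul_order_lt_mul_card (hG : IsNDLGraph n d lam G) (hlam : 0 < lam) (hlamδ : 2 * lam ≤ δ)
    {S T : Finset V} (hTS : #T < #S) (hδ : ∀ a ∈ S, δ ≤ #(G.neighborFinset a ∩ T)) :
    lam * n < d * #S := by
  have hS : S.Nonempty := card_pos.mp (Nat.zero_lt_of_lt hTS)
  have hn : (0 : ℝ) < n := by exact_mod_cast hG.order_pos
  have hT : lam ≤ d * #T / n := by
    linarith [hG.le_of_forall_le_card_neighborFinset_inter hlam.le hS hTS.le hδ]
  rw [le_div_iff₀ hn] at hT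
  have hd : (0 : ℝ) < d := pos_of_mul_pos_left ((mul_pos hlam hn).trans_le hT) (Nat.cast_nonneg _)
  refine hT.trans_lt ?_
  gcongr

lemma mul_sqrt_card_mul_card_le (hG : IsNDLGraph n d lam G) (hlam : 0 ≤ lam) {S T : Finset V}
    (hST : G.interedges S T = ∅) : d * √(#S * #T) ≤ lam * n := by
  have hn : (0 : ℝ) < n := by exact_mod_cast hG.order_pos
  have hmix := (abs_le.mp (hG.expander_mixing hlam S T)).1
  rw [hST, card_empty, Nat.cast_zero, zero_sub, neg_le_neg_iff, div_le_iff₀ hn] at hmix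
  rcases (Real.sqrt_nonneg (#S * #T : ℝ)).eq_or_lt with h0 | h0
  · rw [← h0, mul_zero]
    positivity
  · refine le_of_mul_le_mul_right ?_ h0
    calc d * √(#S * #T) * √(#S * #T) = d * (#S * #T) := by
          rw [mul_assoc, Real.mul_self_sqrt (by positivity)]
      _ ≤ lam * n * √(#S * #T) := by linarith

lemma interedges_nonempty (hG : IsNDLGraph n d lam G) (hlam : 0 ≤ lam) {S T : Finset V}
    (hS : lam * n < d * #S) (hT : lam * n < d * #T) : (G.interedges S T).Nonempty := by
  rw [nonempty_iff_ne_empty]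
  intro hST
  refine (hG.mul_sqrt_card_mul_card_le hlam hST).not_gt ?_
  refine lt_of_pow_lt_pow_left₀ 2 (by positivity) ?_
  calc (lam * n) ^ 2 < (d * #S) * (d * #T) := by
        rw [sq]
        exact mul_lt_mul'' hS hT (by positivity) (by positivity)
    _ = (d * √(#S * #T)) ^ 2 := by
        rw [mul_pow, Real.sq_sqrt (by positivity)]
        ring

end IsNDLGraph

lemma two_mul_le_mul_div_of_four_div_mul_le {ε d lam L : ℝ} (hε : 0 < ε) (hlam : 0 < lam)
    (hL : 0 < L) (h : 4 / ε * L ≤ d / lam) : 2 * lam ≤ ε * d / (2 * L) := by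
  rw [div_mul_eq_mul_div, div_le_div_iff₀ hε hlam] at h
  rw [le_div_iff₀ (by positivity)]
  linarith

theorem ndl_bipartite_perfect_matching_general {n d : ℕ} {lam δ : ℝ} {V : Type*} [Fintype V]
    [DecidableEq V] {G : SimpleGraph V} [DecidableRel G.Adj] (hG : IsNDLGraph n d lam G)
    (hlam : 0 < lam) (hlamδ : 2 * lam ≤ δ) {A B : Finset V} (hAB : #A = #B)
    (hA : ∀ a ∈ A, δ ≤ #(G.neighborFinset a ∩ B)) (hB : ∀ b ∈ B, δ ≤ #(G.neighborFinset b ∩ A)) :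
    ∃ f : {x // x ∈ A} → {x // x ∈ B},
      Function.Bijective f ∧ ∀ a : {x // x ∈ A}, G.Adj a.1 (f a).1 := by
  refine exists_bijective_rel_of_forall_card_le hAB fun S hSA T hTB hST => ?_
  by_contra! hTS
  have hcompl : #(A \ S) < #(B \ T) := by
    have := card_le_card hSA
    rw [card_sdiff_of_subset hSA, card_sdiff_of_subset hTB]
    omega
  have hS : lam * n < d * #S := by
    refine hG.mul_order_lt_mul_card hlam hlamδ hTS fun a ha => (hA a (hSA ha)).trans ?_
    refine Nat.cast_le.mpr (card_le_card fun b hb => ?_)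
    rw [mem_inter, mem_neighborFinset] at hb ⊢
    exact ⟨hb.1, hST a ha b hb.2 hb.1⟩
  have hBT : lam * n < d * #(B \ T) := by
    refine hG.mul_order_lt_mul_card hlam hlamδ hcompl fun b hb => ?_
    rw [mem_sdiff] at hb
    refine (hB b hb.1).trans (Nat.cast_le.mpr (card_le_card fun a ha => ?_))
    rw [mem_inter, mem_neighborFinset] at ha ⊢
    exact ⟨ha.1, mem_sdiff.mpr ⟨ha.2, fun haS => hb.2 (hST a haS b hb.1 ha.1.symm)⟩⟩
  obtain ⟨⟨a, b⟩, hab⟩ := hG.interedges_nonempty hlam.le hS hBT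
  rw [mk_mem_interedges_iff, mem_sdiff] at hab
  exact hab.2.1.2 (hST a hab.1 b hab.2.1.1 hab.2.2)

/-- Lemma 2.6: for `0 < 1/C ≪ ε ≪ 1`, if `G` is an `(n,d,λ)`-graph with `n ≥ 3`
and `d/λ ≥ C log³ n`, and `A, B` are disjoint equal-size vertex sets such that
every vertex of `A` (resp. `B`) has at least `εd/(2 log³ n)` neighbours in `B`
(resp. `A`), then the bipartite graph `G[A,B]` has a perfect matching. -/
theorem ndl_bipartite_perfect_matching :
    ∃ ε₀ : ℝ, 0 < ε₀ ∧ ε₀ < 1 ∧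
      ∀ ε : ℝ, 0 < ε → ε ≤ ε₀ →
        ∃ C : ℝ, 0 < C ∧
          ∀ (n d : ℕ) (lam : ℝ), 3 ≤ n → 0 < lam →
            C * (Real.log n) ^ 3 ≤ (d : ℝ) / lam →
            ∀ (V : Type) [Fintype V] [DecidableEq V]
              (G : SimpleGraph V) [DecidableRel G.Adj],
              IsNDLGraph n d lam G →
              ∀ A B : Finset V, Disjoint A B → A.card = B.card →
                (∀ a ∈ A, ε * (d : ℝ) / (2 * (Real.log n) ^ 3) ≤
                    (((G.neighborFinset a) ∩ B).card : ℝ)) →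
                (∀ b ∈ B, ε * (d : ℝ) / (2 * (Real.log n) ^ 3) ≤
                    (((G.neighborFinset b) ∩ A).card : ℝ)) →
                ∃ f : {x // x ∈ A} → {x // x ∈ B},
                  Function.Bijective f ∧ ∀ a : {x // x ∈ A}, G.Adj a.1 (f a).1 := by
  refine ⟨1 / 2, by norm_num, by norm_num, fun ε hε _ => ⟨4 / ε, by positivity, ?_⟩⟩
  intro n d lam hn hlam hC V _ _ G _ hG A B _ hAB hA hB
  have hlog : 0 < Real.log n := Real.log_pos (by exact_mod_cast (by omega : 1 < n))
  exact ndl_bipartite_perfect_matching_general hG hlam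
    (two_mul_le_mul_div_of_four_div_mul_le hε hlam (by positivity) hC) hAB hA hB
end
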